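/- arXiv:2412.15782 — 2 statements merged into one kernel-verified Lean document; each statement's English description precedes it below -/
import Mathlib

section
/- For every inverse temperature β ∈ (0,∞) and every range exponent α > 3, there exist constants c_β > 0 and C_β < ∞ (depending only on β and α) such that for every integer N ≥ 1, the variance of the height at the origin under the discrete Gaussian long-range chain satisfies c_β N ≤ Var_{N,β,α}[φ(0)] ≤ C_β N. -/
noncomputable section

/-- Configurations of the long-range chain of length `N`: integer-valued height functions
on `ℤ` vanishing outside `{-N, …, N}`. -/
def ChainConfig (N : ℕ) : Type :=
  {φ : ℤ → ℤ // ∀ k : ℤ, (N : ℤ) < |k| → φ k = 0}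

/-- Energy `β ∑_{i ≠ j} |φ(i) − φ(j)|^q / |i − j|^α` of a configuration of the long-range
chain with potential exponent `q` and range exponent `α`. -/
def chainEnergy (β α q : ℝ) (φ : ℤ → ℤ) : ℝ :=
  β * ∑' p : ℤ × ℤ,
      if p.1 = p.2 then 0
      else |((φ p.1 - φ p.2 : ℤ) : ℝ)| ^ q / |((p.1 - p.2 : ℤ) : ℝ)| ^ α

/-- Boltzmann weight of a configuration. -/
def chainWeight (β α q : ℝ) (φ : ℤ → ℤ) : ℝ :=
  Real.exp (-chainEnergy β α q φ)

/-- Partition function of the long-range chain. -/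
def chainZ (N : ℕ) (β α q : ℝ) : ℝ :=
  ∑' φ : ChainConfig N, chainWeight β α q φ.val

/-- Mean of the height at the origin. -/
def chainMean (N : ℕ) (β α q : ℝ) : ℝ :=
  (∑' φ : ChainConfig N, ((φ.val 0 : ℤ) : ℝ) * chainWeight β α q φ.val) / chainZ N β α q

/-- Variance of the height at the origin under the long-range chain `μ_{N,β,α}`
(with potential exponent `q`; `q = 2` is the discrete Gaussian chain,
`q ∈ (0,2)` the `q`-SOS chain). -/
def chainVar (N : ℕ) (β α q : ℝ) : ℝ :=
  (∑' φ : ChainConfig N, ((φ.val 0 : ℤ) : ℝ) ^ 2 * chainWeight β α q φ.val) / chainZ N β α q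
    - chainMean N β α q ^ 2

end

open Filter Topology

lemma psd_sum_nonneg {X : Type*} {M : Matrix X X ℝ} (hM : M.PosSemidef) (F : Finset X)
    (c : X → ℝ) : 0 ≤ ∑ a ∈ F, ∑ b ∈ F, c a * M a b * c b := by
  classical
  have h := hM.2 (Finsupp.indicator F (fun a _ => c a))
  rw [Finsupp.sum_of_support_subset _ (Finsupp.support_indicator_subset F _) _ (by simp)] at h
  refine h.trans_eq (Finset.sum_congr rfl fun a ha => ?_)
  rw [Finsupp.sum_of_support_subset _ (Finsupp.support_indicator_subset F _) _ (by simp)]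
  refine Finset.sum_congr rfl fun b hb => ?_
  simp [ha, hb]

lemma psd_pow {X : Type*} {M P : Matrix X X ℝ} (hM : M.PosSemidef) (hP : P.PosSemidef) (n : ℕ) :
    (Matrix.of fun a b => P a b * M a b ^ n).PosSemidef := by
  induction n with
  | zero =>
    have : (Matrix.of fun a b => P a b * M a b ^ 0) = P := by ext a b; simp
    rw [this]; exact hP
  | succ n ih =>
    have h1 : (Matrix.of fun a b => P a b * M a b ^ (n + 1)) =
        (Matrix.of fun a b => P a b * M a b ^ n).hadamard M := by
      ext a b
      simp [Matrix.hadamard, pow_succ, mul_assoc]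
    rw [h1]
    exact ih.hadamard hM

lemma psd_sinh {X : Type*} {M P : Matrix X X ℝ} (hM : M.PosSemidef) (hP : P.PosSemidef)
    (F : Finset X) (c : X → ℝ) :
    0 ≤ ∑ a ∈ F, ∑ b ∈ F, c a * (P a b * Real.sinh (M a b)) * c b := by
  have h : HasSum (fun n : ℕ => ∑ a ∈ F, ∑ b ∈ F,
      c a * (P a b * (M a b ^ (2 * n + 1) / ((2 * n + 1).factorial : ℝ))) * c b)
      (∑ a ∈ F, ∑ b ∈ F, c a * (P a b * Real.sinh (M a b)) * c b) := by
    refine hasSum_sum fun a _ => hasSum_sum fun b _ => ?_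
    exact (((Real.hasSum_sinh (M a b)).mul_left (P a b)).mul_left (c a)).mul_right (c b)
  refine h.nonneg fun n => ?_
  have := psd_sum_nonneg (psd_pow hM hP (2 * n + 1)) F c
  have h2 : ∑ a ∈ F, ∑ b ∈ F,
      c a * (P a b * (M a b ^ (2 * n + 1) / ((2 * n + 1).factorial : ℝ))) * c b
      = (∑ a ∈ F, ∑ b ∈ F, c a * (Matrix.of fun a b => P a b * M a b ^ (2 * n + 1)) a b * c b)
        / ((2 * n + 1).factorial : ℝ) := by
    rw [Finset.sum_div]
    refine Finset.sum_congr rfl fun a _ => ?_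
    rw [Finset.sum_div]
    refine Finset.sum_congr rfl fun b _ => ?_
    simp only [Matrix.of_apply]
    ring
  rw [h2]
  positivity

lemma hasSum_nonneg_of_square {X : Type*} {G : X × X → ℝ} {s : ℝ} (hG : HasSum G s)
    (h : ∀ F : Finset X, 0 ≤ ∑ a ∈ F, ∑ b ∈ F, G (a, b)) : 0 ≤ s := by
  have h1 : Tendsto (fun F : Finset X => (F, F)) atTop atTop := by
    rw [← prod_atTop_atTop_eq]; exact tendsto_diag
  have h2 := tendsto_finsetProd_atTop.comp h1
  have h3 : Tendsto (fun F : Finset (X × X) => ∑ b ∈ F, G b) atTop (𝓝 s) := by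
    simpa [HasSum] using hG
  refine ge_of_tendsto' (h3.comp h2) fun F => ?_
  have := h F
  rw [← Finset.sum_product'] at this
  exact this

/-- Cast of an integer vector to a real vector. -/
def castV {ι : Type*} (x : ι → ℤ) : ι → ℝ := fun i => (x i : ℝ)

lemma castV_add {ι : Type*} (x y : ι → ℤ) : castV (x + y) = castV x + castV y := by
  ext i; simp [castV]

lemma castV_sub {ι : Type*} (x y : ι → ℤ) : castV (x - y) = castV x - castV y := by
  ext i; simp [castV]

lemma psd_of_bilin {ι : Type*} (R : LinearMap.BilinForm ℝ (ι → ℝ))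
    (hs : ∀ x y, R x y = R y x) (hR : ∀ v, 0 ≤ R v v) :
    (Matrix.of fun a b : ι → ℤ => R (castV a) (castV b)).PosSemidef := by
  refine ⟨?_, fun x => ?_⟩
  · ext a b
    simp [Matrix.conjTranspose, hs (castV a)]
  · have h := hR (x.sum fun i xi => xi • castV i)
    refine h.trans_eq ?_
    simp only [Finsupp.sum, map_sum, LinearMap.sum_apply, map_smul, LinearMap.smul_apply,
      smul_eq_mul, Matrix.of_apply, star_trivial, Finset.mul_sum]
    rw [Finset.sum_comm]
    refine Finset.sum_congr rfl fun a _ => Finset.sum_congr rfl fun b _ => ?_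
    ring

theorem gauss_mono {ι : Type*} [Fintype ι] (A B : LinearMap.BilinForm ℝ (ι → ℝ))
    (hA : ∀ x y, A x y = A y x) (hB : ∀ x y, B x y = B y x) (hAB : ∀ v, A v v ≤ B v v)
    (u : (ι → ℝ) →ₗ[ℝ] ℝ)
    (h0 : Summable fun x : ι → ℤ => Real.exp (-A (castV x) (castV x)))
    (h2 : Summable fun x : ι → ℤ => u (castV x) ^ 2 * Real.exp (-A (castV x) (castV x))) :
    (∑' x : ι → ℤ, u (castV x) ^ 2 * Real.exp (-B (castV x) (castV x))) *
      (∑' x : ι → ℤ, Real.exp (-A (castV x) (castV x))) ≤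
    (∑' x : ι → ℤ, u (castV x) ^ 2 * Real.exp (-A (castV x) (castV x))) *
      (∑' x : ι → ℤ, Real.exp (-B (castV x) (castV x))) := by
  classical
  have k0 : Summable fun x : ι → ℤ => Real.exp (-B (castV x) (castV x)) :=
    Summable.of_nonneg_of_le (fun _ => by positivity)
      (fun x => Real.exp_le_exp.2 (neg_le_neg (hAB _))) h0
  have k2 : Summable fun x : ι → ℤ => u (castV x) ^ 2 * Real.exp (-B (castV x) (castV x)) :=
    Summable.of_nonneg_of_le (fun _ => by positivity)
      (fun x => mul_le_mul_of_nonneg_left (Real.exp_le_exp.2 (neg_le_neg (hAB _)))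
        (by positivity)) h2
  set eA : (ι → ℤ) → ℝ := fun x => Real.exp (-A (castV x) (castV x)) with heA
  set eB : (ι → ℤ) → ℝ := fun x => Real.exp (-B (castV x) (castV x)) with heB
  set U : (ι → ℤ) → ℝ := fun x => u (castV x) with hU
  change Summable (fun x => U x ^ 2 * eA x) at h2
  change Summable (fun x => U x ^ 2 * eB x) at k2
  change (∑' x, U x ^ 2 * eB x) * (∑' x, eA x) ≤ (∑' x, U x ^ 2 * eA x) * (∑' x, eB x)
  have nA : ∀ x, 0 ≤ eA x := fun x => by positivity
  have nB : ∀ x, 0 ≤ eB x := fun x => by positivity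
  have n2A : ∀ x, 0 ≤ U x ^ 2 * eA x := fun x => by positivity
  have n2B : ∀ x, 0 ≤ U x ^ 2 * eB x := fun x => by positivity
  have s1 := h2.hasSum.mul k0.hasSum (h2.mul_of_nonneg k0 n2A nB)
  have s2 := k2.hasSum.mul h0.hasSum (k2.mul_of_nonneg h0 n2B nA)
  have s3 := h0.hasSum.mul k2.hasSum (h0.mul_of_nonneg k2 nA n2B)
  have s4 := k0.hasSum.mul h2.hasSum (k0.mul_of_nonneg h2 nB n2A)
  have S := ((s1.sub s2).sub s3).add s4
  let k : (ι → ℤ) → ℝ := fun a => U a * Real.exp (-(A (castV a) (castV a) + B (castV a) (castV a)) / 4)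
  let M : Matrix (ι → ℤ) (ι → ℤ) ℝ :=
    Matrix.of fun a b => ((1 / 2 : ℝ) • (B - A)) (castV a) (castV b)
  let π : (ι → ℤ) → (ι → ZMod 2) := fun a i => (a i : ZMod 2)
  let P : Matrix (ι → ℤ) (ι → ℤ) ℝ := (1 : Matrix (ι → ZMod 2) (ι → ZMod 2) ℝ).submatrix π π
  have hM : M.PosSemidef := by
    refine psd_of_bilin _ (fun x y => ?_) (fun v => ?_)
    · simp [hA x y, hB x y]
    · have := hAB v
      simp only [LinearMap.smul_apply, LinearMap.sub_apply, smul_eq_mul]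
      linarith
  have hP : P.PosSemidef := Matrix.PosSemidef.one.submatrix π
  let G : (ι → ℤ) × (ι → ℤ) → ℝ :=
    fun p => k p.1 * (P p.1 p.2 * Real.sinh (M p.1 p.2)) * k p.2
  let e : (ι → ℤ) × (ι → ℤ) → (ι → ℤ) × (ι → ℤ) := fun p => (p.1 + p.2, p.1 - p.2)
  have he : Function.Injective e := by
    rintro ⟨x, y⟩ ⟨x', y'⟩ h
    simp only [e, Prod.mk.injEq] at h
    have h1 : ∀ i, x i + y i = x' i + y' i := fun i => congrFun h.1 i
    have h2 : ∀ i, x i - y i = x' i - y' i := fun i => congrFun h.2 i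
    ext i
    · have := h1 i; have := h2 i; simp only; omega
    · have := h1 i; have := h2 i; simp only; omega
  have hG0 : ∀ p, p ∉ Set.range e → G p = 0 := by
    rintro ⟨a, b⟩ hp
    have : π a ≠ π b := by
      intro hab
      apply hp
      have h3 : ∀ i, ∃ c, a i - b i = 2 * c := by
        intro i
        have := congrFun hab i
        have h4 := (ZMod.intCast_eq_intCast_iff_dvd_sub (b i) (a i) 2).1 this.symm
        exact h4
      choose c hc using h3
      refine ⟨(fun i => b i + c i, fun i => c i), ?_⟩
      ext i
      · have := hc i; simp [e]; omega
      · have := hc i; simp [e]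
    simp [G, P, this]
  have hGe : ∀ p, G (e p) = (U p.1 ^ 2 * eA p.1 * eB p.2 - U p.1 ^ 2 * eB p.1 * eA p.2
      - eA p.1 * (U p.2 ^ 2 * eB p.2) + eB p.1 * (U p.2 ^ 2 * eA p.2)) / 2 := by
    rintro ⟨x, y⟩
    have h5 : π (x + y) = π (x - y) := by
      funext i
      simp only [π, Pi.add_apply, Pi.sub_apply]
      rw [ZMod.intCast_eq_intCast_iff_dvd_sub]
      exact ⟨-(y i), by push_cast; ring⟩
    have h6 : P (x + y) (x - y) = 1 := by
      show (1 : Matrix (ι → ZMod 2) (ι → ZMod 2) ℝ) (π (x + y)) (π (x - y)) = 1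
      rw [h5, Matrix.one_apply_eq]
    simp only [G, e, h6, k, M, Matrix.of_apply, castV_add, castV_sub, hU, heA, heB, map_add, map_sub,
      LinearMap.add_apply, LinearMap.sub_apply, LinearMap.smul_apply, smul_eq_mul, Real.sinh_eq,
      hA (castV y) (castV x), hB (castV y) (castV x), one_mul]
    generalize A (castV x) (castV x) = Ax
    generalize A (castV y) (castV y) = Ay
    generalize A (castV x) (castV y) = Axy
    generalize B (castV x) (castV x) = Bx
    generalize B (castV y) (castV y) = By
    generalize B (castV x) (castV y) = Bxy
    have e1 : Real.exp (-Ax) * Real.exp (-By) =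
      Real.exp (-(Ax + Axy + (Axy + Ay) + (Bx + Bxy + (Bxy + By))) / 4) *
      Real.exp (-(Ax - Axy - (Axy - Ay) + (Bx - Bxy - (Bxy - By))) / 4) *
      Real.exp (1 / 2 * (Bx + Bxy - (Bxy + By) - (Ax + Axy - (Axy + Ay)))) := by
      rw [← Real.exp_add, ← Real.exp_add, ← Real.exp_add]; congr 1; ring
    have e2 : Real.exp (-Bx) * Real.exp (-Ay) =
      Real.exp (-(Ax + Axy + (Axy + Ay) + (Bx + Bxy + (Bxy + By))) / 4) *
      Real.exp (-(Ax - Axy - (Axy - Ay) + (Bx - Bxy - (Bxy - By))) / 4) *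
      Real.exp (-(1 / 2 * (Bx + Bxy - (Bxy + By) - (Ax + Axy - (Axy + Ay))))) := by
      rw [← Real.exp_add, ← Real.exp_add, ← Real.exp_add]; congr 1; ring
    have e3 : ∀ p q : ℝ, p ^ 2 * Real.exp (-Ax) * Real.exp (-By) - p ^ 2 * Real.exp (-Bx) * Real.exp (-Ay)
       - Real.exp (-Ax) * (q ^ 2 * Real.exp (-By)) + Real.exp (-Bx) * (q ^ 2 * Real.exp (-Ay))
       = (p ^ 2 - q ^ 2) * (Real.exp (-Ax) * Real.exp (-By) - Real.exp (-Bx) * Real.exp (-Ay)) := by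
      intros; ring
    rw [e3, e1, e2]
    ring
  have hG : HasSum G (((∑' x, U x ^ 2 * eA x) * (∑' x, eB x) - (∑' x, U x ^ 2 * eB x) * (∑' x, eA x)
      - (∑' x, eA x) * (∑' x, U x ^ 2 * eB x) + (∑' x, eB x) * (∑' x, U x ^ 2 * eA x)) / 2) := by
    rw [← he.hasSum_iff hG0]
    have hfun : G ∘ e = _ := funext hGe
    rw [hfun]
    exact S.div_const 2
  have hpos := hasSum_nonneg_of_square hG (fun F => psd_sinh hM hP F k)
  linarith


lemma hasSum_pi_prod {ι : Type*} [Fintype ι] (f : ι → ℤ → ℝ) (hf : ∀ i, Summable (f i)) :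
    HasSum (fun x : ι → ℤ => ∏ i, f i (x i)) (∏ i, ∑' n, f i n) := by
  classical
  open MeasureTheory in
  have hc : Measure.pi (fun _ : ι => (Measure.count : Measure ℤ)) = Measure.count := by
    refine Measure.ext_of_singleton fun a => ?_
    rw [Measure.pi_singleton]
    simp
  have hi : ∀ i, MeasureTheory.Integrable (f i) MeasureTheory.Measure.count := fun i =>
    MeasureTheory.integrable_count_iff.2 (hf i).norm
  have h1 := MeasureTheory.Integrable.fintype_prod (μ := fun _ => MeasureTheory.Measure.count) hi
  have h2 := MeasureTheory.integral_fintype_prod_eq_prod f (μ := fun _ => MeasureTheory.Measure.count)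
  rw [hc] at h1 h2
  have h3 : ∀ i, ∫ n, f i n ∂MeasureTheory.Measure.count = ∑' n, f i n := fun i => by
    rw [MeasureTheory.integral_countable (hi i)]
    simp [MeasureTheory.Measure.real]
  rw [MeasureTheory.integral_countable h1] at h2
  simp only [MeasureTheory.Measure.real, MeasureTheory.Measure.count_singleton, h3] at h2
  rw [← h2]
  have h4 : Summable (fun x : ι → ℤ => ∏ i, f i (x i)) :=
    Summable.of_norm (MeasureTheory.integrable_count_iff.1 h1)
  simpa using h4.hasSum

lemma summable_gauss (d : ℝ) (hd : 0 < d) (k : ℕ) :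
    Summable fun n : ℤ => (n : ℝ) ^ k * Real.exp (-(d * (n : ℝ) ^ 2)) := by
  have h : ∀ n : ℕ, (n : ℝ) ^ k * Real.exp (-(d * (n : ℝ) ^ 2)) ≤ (n : ℝ) ^ k * Real.exp (-d * n) := by
    intro n
    gcongr
    have : (n : ℝ) ≤ (n : ℝ) ^ 2 := by
      rcases Nat.eq_zero_or_pos n with rfl | hn
      · simp
      · have : (1 : ℝ) ≤ n := by exact_mod_cast hn
        nlinarith
    nlinarith
  have hs : Summable fun n : ℕ => (n : ℝ) ^ k * Real.exp (-(d * (n : ℝ) ^ 2)) :=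
    Summable.of_nonneg_of_le (fun _ => by positivity) h (Real.summable_pow_mul_exp_neg_nat_mul k hd)
  refine Summable.of_nat_of_neg (by simpa using hs) ?_
  have := hs.mul_left ((-1) ^ k)
  refine this.congr fun n => ?_
  push_cast
  rw [neg_pow (n : ℝ) k, neg_sq, mul_assoc]

/-- Variance of the one-dimensional discrete Gaussian. -/
noncomputable def sg (d : ℝ) : ℝ :=
  (∑' n : ℤ, (n : ℝ) ^ 2 * Real.exp (-(d * (n : ℝ) ^ 2))) / ∑' n : ℤ, Real.exp (-(d * (n : ℝ) ^ 2))

lemma zg_pos (d : ℝ) (hd : 0 < d) : 0 < ∑' n : ℤ, Real.exp (-(d * (n : ℝ) ^ 2)) := by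
  have := summable_gauss d hd 0
  simp only [pow_zero, one_mul] at this
  exact this.tsum_pos (fun _ => by positivity) 0 (by positivity)

lemma sg_pos (d : ℝ) (hd : 0 < d) : 0 < sg d := by
  refine div_pos ?_ (zg_pos d hd)
  exact (summable_gauss d hd 2).tsum_pos (fun _ => by positivity) 1 (by simp; positivity)

lemma odd_tsum {X : Type*} [AddGroup X] (f : X → ℝ) (h : ∀ x, f (-x) = - f x) : ∑' x, f x = 0 := by
  have h1 : ∑' x, f (-x) = ∑' x, f x := (Equiv.neg X).tsum_eq f
  simp only [h, tsum_neg] at h1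
  linarith

lemma HasSum.congr_sum_val {X : Type*} {f g : X → ℝ} {s t : ℝ} (h : HasSum f s)
    (h1 : ∀ x, g x = f x) (h2 : t = s) : HasSum g t := by
  have : g = f := funext h1
  rw [this, h2]; exact h

lemma gauss_prod {ι : Type*} [Fintype ι] (d : ι → ℝ) (hd : ∀ i, 0 < d i) (a : ι → ℝ) :
    HasSum (fun x : ι → ℤ => Real.exp (-∑ i, d i * (x i : ℝ) ^ 2))
      (∏ i, ∑' n : ℤ, Real.exp (-(d i * (n : ℝ) ^ 2))) ∧
    HasSum (fun x : ι → ℤ => (∑ i, a i * (x i : ℝ)) ^ 2 * Real.exp (-∑ i, d i * (x i : ℝ) ^ 2))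
      ((∑ i, a i ^ 2 * sg (d i)) * ∏ i, ∑' n : ℤ, Real.exp (-(d i * (n : ℝ) ^ 2))) := by
  classical
  have hexp : ∀ x : ι → ℤ, Real.exp (-∑ i, d i * (x i : ℝ) ^ 2) =
      ∏ i, Real.exp (-(d i * (x i : ℝ) ^ 2)) := fun x => by
    rw [← Finset.sum_neg_distrib, Real.exp_sum]
  simp only [hexp]
  constructor
  · refine hasSum_pi_prod (fun i n => Real.exp (-(d i * (n : ℝ) ^ 2))) fun i => ?_
    simpa using summable_gauss (d i) (hd i) 0
  · have key : ∀ i j, HasSum (fun x : ι → ℤ => (x i : ℝ) * (x j : ℝ) *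
        ∏ k, Real.exp (-(d k * (x k : ℝ) ^ 2)))
        (if i = j then sg (d i) * ∏ k, ∑' n : ℤ, Real.exp (-(d k * (n : ℝ) ^ 2)) else 0) := by
      intro i j
      have h := hasSum_pi_prod (fun k (n : ℤ) => (n : ℝ) ^ ((if k = i then 1 else 0) + (if k = j then 1 else 0)) *
        Real.exp (-(d k * (n : ℝ) ^ 2))) (fun k => summable_gauss (d k) (hd k) _)
      have hf : (fun x : ι → ℤ => (x i : ℝ) * (x j : ℝ) * ∏ k, Real.exp (-(d k * (x k : ℝ) ^ 2))) =
        (fun x : ι → ℤ => ∏ k, ((x k : ℝ) ^ ((if k = i then 1 else 0) + (if k = j then 1 else 0)) *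
        Real.exp (-(d k * (x k : ℝ) ^ 2)))) := by
        funext x
        rw [Finset.prod_mul_distrib]
        congr 1
        simp_rw [pow_add]
        rw [Finset.prod_mul_distrib]
        simp [pow_ite]
      rw [hf]
      convert h using 1
      split_ifs with hij
      · subst hij
        rw [← Finset.mul_prod_erase _ _ (Finset.mem_univ i), ← Finset.mul_prod_erase _ (fun k => ∑' n : ℤ, (n : ℝ) ^ ((if k = i then 1 else 0) + (if k = i then 1 else 0)) *
        Real.exp (-(d k * (n : ℝ) ^ 2))) (Finset.mem_univ i), ← mul_assoc]
        congr 1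
        · have := (zg_pos (d i) (hd i)).ne'
          simp only [sg, if_true]
          rw [div_mul_cancel₀ _ this]
        · refine Finset.prod_congr rfl fun k hk => ?_
          simp [Finset.ne_of_mem_erase hk]
      · symm
        refine Finset.prod_eq_zero (Finset.mem_univ i) ?_
        refine odd_tsum _ fun n => ?_
        simp [hij]
    have h := hasSum_sum (s := Finset.univ) (fun i _ => hasSum_sum (s := Finset.univ)
      (fun j _ => (key i j).mul_left (a i * a j)))
    refine HasSum.congr_sum_val h (fun x => ?_) ?_
    · rw [sq, Finset.sum_mul_sum, Finset.sum_mul]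
      refine Finset.sum_congr rfl fun i _ => ?_
      rw [Finset.sum_mul]
      refine Finset.sum_congr rfl fun j _ => ?_
      ring
    · rw [Finset.sum_mul]
      refine Finset.sum_congr rfl fun i _ => ?_
      simp
      ring


/-- Bilinear energy summand. -/
noncomputable def en (α : ℝ) (x y : ℤ → ℝ) (p : ℤ × ℤ) : ℝ :=
  (x p.1 - x p.2) * (y p.1 - y p.2) / |((p.1 - p.2 : ℤ) : ℝ)| ^ α

lemma shift_nat (x : ℤ → ℝ) (hx : Summable fun i => (x (i + 1) - x i) ^ 2) (n : ℕ) :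
    Summable (fun i => (x (i + n) - x i) ^ 2) ∧
    ∑' i, (x (i + n) - x i) ^ 2 ≤ (n : ℝ) ^ 2 * ∑' i, (x (i + 1) - x i) ^ 2 := by
  have hsh : ∀ m : ℕ, HasSum (fun i : ℤ => (x (i + m + 1) - x (i + m)) ^ 2)
      (∑' i, (x (i + 1) - x i) ^ 2) := fun m =>
    (Equiv.addRight (m : ℤ)).hasSum_iff (f := fun i => (x (i + 1) - x i) ^ 2) |>.2 hx.hasSum
  have hR : HasSum (fun i : ℤ => (n : ℝ) * ∑ m ∈ Finset.range n, (x (i + m + 1) - x (i + m)) ^ 2)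
      ((n : ℝ) ^ 2 * ∑' i, (x (i + 1) - x i) ^ 2) := by
    have := (hasSum_sum (s := Finset.range n) (fun m _ => hsh m)).mul_left (n : ℝ)
    have h9 : ∀ t : ℝ, (n : ℝ) ^ 2 * t = (n : ℝ) * ∑ m ∈ Finset.range n, t := by
      intro t; simp; ring
    rw [h9]; exact this
  have hle : ∀ i, (x (i + n) - x i) ^ 2 ≤
      (n : ℝ) * ∑ m ∈ Finset.range n, (x (i + m + 1) - x (i + m)) ^ 2 := by
    intro i
    have h1 : x (i + n) - x i = ∑ m ∈ Finset.range n, (x (i + m + 1) - x (i + m)) := by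
      have := Finset.sum_range_sub (fun m : ℕ => x (i + m)) n
      simp only [Nat.cast_add, Nat.cast_one, Nat.cast_zero, add_zero, ← add_assoc] at this
      exact this.symm
    rw [h1]
    have := sq_sum_le_card_mul_sum_sq (s := Finset.range n)
      (f := fun m : ℕ => x (i + m + 1) - x (i + m))
    simpa using this
  have hS := Summable.of_nonneg_of_le (fun i => sq_nonneg _) hle hR.summable
  exact ⟨hS, hasSum_le hle hS.hasSum hR⟩

lemma shift_int (x : ℤ → ℝ) (hx : Summable fun i => (x (i + 1) - x i) ^ 2) (n : ℤ) :
    Summable (fun i => (x (i + n) - x i) ^ 2) ∧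
    ∑' i, (x (i + n) - x i) ^ 2 ≤ (n : ℝ) ^ 2 * ∑' i, (x (i + 1) - x i) ^ 2 := by
  obtain ⟨m, rfl | rfl⟩ := n.eq_nat_or_neg
  · simpa using shift_nat x hx m
  · obtain ⟨h1, h2⟩ := shift_nat x hx m
    have he : ∀ i : ℤ, (x (i + -(m : ℤ)) - x i) ^ 2 =
        (fun i => (x (i + m) - x i) ^ 2) (Equiv.addRight (-(m : ℤ)) i) := by
      intro i
      simp
      ring
    simp only [he]
    rw [(Equiv.addRight (-(m : ℤ))).tsum_eq (fun i => (x (i + m) - x i) ^ 2)]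
    refine ⟨(Equiv.addRight (-(m : ℤ))).summable_iff.2 h1, by simpa using h2⟩

/-- The constant `∑ n² / |n|^α`. -/
noncomputable def Kc (α : ℝ) : ℝ := ∑' n : ℤ, (n : ℝ) ^ 2 / |(n : ℝ)| ^ α

lemma Kc_summable (α : ℝ) (hα : 3 < α) : Summable fun n : ℤ => (n : ℝ) ^ 2 / |(n : ℝ)| ^ α := by
  refine Summable.of_nonneg_of_le (fun n => by positivity) (fun n => ?_)
    (Real.summable_abs_int_rpow (b := α - 2) (by linarith))
  rcases eq_or_ne n 0 with rfl | hn
  · simp; positivity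
  · have : (0 : ℝ) < |(n : ℝ)| := by positivity
    rw [neg_sub, Real.rpow_sub this, Real.rpow_two, sq_abs]

lemma Kc_nonneg (α : ℝ) : 0 ≤ Kc α := tsum_nonneg fun n => by positivity

/-- Reindexing `(n, i) ↦ (i + n, i)`. -/
def shEquiv : ℤ × ℤ ≃ ℤ × ℤ where
  toFun p := (p.2 + p.1, p.2)
  invFun p := (p.1 - p.2, p.2)
  left_inv p := by ext <;> simp
  right_inv p := by ext <;> simp

lemma en_bound (α : ℝ) (hα : 3 < α) (x : ℤ → ℝ) (hx : Summable fun i => (x (i + 1) - x i) ^ 2) :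
    Summable (en α x x) ∧ ∑' p, en α x x p ≤ Kc α * ∑' i, (x (i + 1) - x i) ^ 2 := by
  have hf : ∀ p, en α x x (shEquiv p) = (x (p.2 + p.1) - x p.2) ^ 2 / |(p.1 : ℝ)| ^ α := by
    intro p
    simp [en, shEquiv, sq]
  have h1 := fun n => (shift_int x hx n).1
  have h2 := fun n => (shift_int x hx n).2
  have hb : ∀ n : ℤ, ∑' i, (x (i + n) - x i) ^ 2 / |(n : ℝ)| ^ α ≤
      (n : ℝ) ^ 2 / |(n : ℝ)| ^ α * ∑' i, (x (i + 1) - x i) ^ 2 := by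
    intro n
    rw [tsum_div_const, div_mul_eq_mul_div]
    gcongr
    exact h2 n
  have hK := (Kc_summable α hα).mul_right (∑' i, (x (i + 1) - x i) ^ 2)
  have hO : Summable fun n : ℤ => ∑' i, (x (i + n) - x i) ^ 2 / |(n : ℝ)| ^ α :=
    Summable.of_nonneg_of_le (fun n => tsum_nonneg fun i =>
      div_nonneg (sq_nonneg _) (Real.rpow_nonneg (abs_nonneg _) _)) hb hK
  have hs : Summable fun p : ℤ × ℤ => (x (p.2 + p.1) - x p.2) ^ 2 / |(p.1 : ℝ)| ^ α := by
    have hn0 : (0 : ℤ × ℤ → ℝ) ≤ fun p : ℤ × ℤ => (x (p.2 + p.1) - x p.2) ^ 2 / |(p.1 : ℝ)| ^ α :=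
      fun p => div_nonneg (sq_nonneg _) (Real.rpow_nonneg (abs_nonneg _) _)
    have hI : ∀ n : ℤ, Summable fun i => (x (i + n) - x i) ^ 2 / |(n : ℝ)| ^ α := fun n =>
      (h1 n).div_const (|(n : ℝ)| ^ α)
    exact (summable_prod_of_nonneg hn0).2 ⟨hI, hO⟩
  have hs' : Summable (en α x x) := by
    rw [← shEquiv.summable_iff]
    exact hs.congr fun p => (hf p).symm
  refine ⟨hs', ?_⟩
  rw [← shEquiv.tsum_eq]
  simp only [hf]
  rw [hs.tsum_prod, Kc, ← tsum_mul_right]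
  exact Summable.tsum_le_tsum hb hO hK

lemma en_summable (α : ℝ) (hα : 3 < α) (x y : ℤ → ℝ) (hx : Summable fun i => (x (i + 1) - x i) ^ 2)
    (hy : Summable fun i => (y (i + 1) - y i) ^ 2) : Summable (en α x y) := by
  refine Summable.of_norm_bounded ((en_bound α hα x hx).1.add (en_bound α hα y hy).1) fun p => ?_
  simp only [en]
  rw [← add_div, Real.norm_eq_abs, abs_div, abs_of_nonneg (a := |_| ^ α) (by positivity)]
  gcongr
  rw [abs_le]
  constructor <;> nlinarith [sq_nonneg ((x p.1 - x p.2) + (y p.1 - y p.2)),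
    sq_nonneg ((x p.1 - x p.2) - (y p.1 - y p.2)), sq_nonneg (x p.1 - x p.2),
    sq_nonneg (y p.1 - y p.2)]

/-- Index set of the coordinates. -/
abbrev Ix (N : ℕ) : Type := Fin (N + 1) ⊕ Fin N

/-- Coefficients of the parametrisation. -/
def tc (N : ℕ) : Ix N → ℤ → ℤ :=
  Sum.elim (fun j z => if z.natAbs ≤ (j : ℕ) then 1 else 0)
    (fun j z => if z = (j : ℤ) + 1 then 1 else 0)

/-- The parametrisation of chain configurations. -/
def TT (R : Type*) [CommRing R] (N : ℕ) (v : Ix N → R) (z : ℤ) : R :=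
  ∑ i, (tc N i z : R) * v i

lemma TT_supp (R : Type*) [CommRing R] (N : ℕ) (v : Ix N → R) (z : ℤ) (hz : (N : ℤ) < |z|) :
    TT R N v z = 0 := by
  refine Finset.sum_eq_zero fun i _ => ?_
  have : tc N i z = 0 := by
    rcases i with j | j <;> simp only [tc, Sum.elim_inl, Sum.elim_inr] <;> rw [if_neg] <;> grind
  simp [this]

lemma TT_add (R : Type*) [CommRing R] (N : ℕ) (v w : Ix N → R) (z : ℤ) :
    TT R N (v + w) z = TT R N v z + TT R N w z := by
  simp [TT, mul_add, Finset.sum_add_distrib]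

lemma TT_smul (R : Type*) [CommRing R] (N : ℕ) (c : R) (v : Ix N → R) (z : ℤ) :
    TT R N (c • v) z = c * TT R N v z := by
  simp only [TT, Pi.smul_apply, smul_eq_mul, Finset.mul_sum]
  exact Finset.sum_congr rfl fun i _ => by ring

lemma TT_left (R : Type*) [CommRing R] (N : ℕ) (v : Ix N → R) (j : Fin (N + 1)) :
    TT R N v (-(j : ℤ)) - TT R N v (-(j : ℤ) - 1) = v (Sum.inl j) := by
  rw [TT, TT, ← Finset.sum_sub_distrib, Finset.sum_eq_single (Sum.inl j)]
  · rw [← sub_mul]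
    have h1 : tc N (Sum.inl j) (-(j : ℤ)) = 1 := by simp [tc]
    have h2 : tc N (Sum.inl j) (-(j : ℤ) - 1) = 0 := by
      simp only [tc, Sum.elim_inl]; rw [if_neg]; omega
    simp [h1, h2]
  · intro i _ hi
    have : tc N i (-(j : ℤ)) = tc N i (-(j : ℤ) - 1) := by
      rcases i with k | k <;> simp only [tc, Sum.elim_inl, Sum.elim_inr]
      · have : (k : ℕ) ≠ j := fun h => hi (by rw [Fin.ext h])
        split_ifs <;> omega
      · split_ifs <;> omega
    rw [this, sub_self]
  · simp

lemma TT_right (R : Type*) [CommRing R] (N : ℕ) (v : Ix N → R) (j : Fin N) :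
    TT R N v ((j : ℤ) + 1) - TT R N v (-((j : ℤ) + 1)) = v (Sum.inr j) := by
  rw [TT, TT, ← Finset.sum_sub_distrib, Finset.sum_eq_single (Sum.inr j)]
  · rw [← sub_mul]
    have h1 : tc N (Sum.inr j) ((j : ℤ) + 1) = 1 := by simp [tc]
    have h2 : tc N (Sum.inr j) (-((j : ℤ) + 1)) = 0 := by
      simp only [tc, Sum.elim_inr]; rw [if_neg]; omega
    rw [h1, h2]; simp
  · intro i _ hi
    have : tc N i ((j : ℤ) + 1) = tc N i (-((j : ℤ) + 1)) := by
      rcases i with k | k <;> simp only [tc, Sum.elim_inl, Sum.elim_inr]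
      · split_ifs <;> omega
      · have : (k : ℕ) ≠ j := fun h => hi (by rw [Fin.ext h])
        split_ifs <;> omega
    rw [this, sub_self]
  · simp

/-- Extension of a finite vector to the integers by zero. -/
def ext0 {n : ℕ} (f : Fin n → ℝ) (z : ℤ) : ℝ := ∑ j : Fin n, if z = ((j : ℕ) : ℤ) then f j else 0

lemma ext0_sq {n : ℕ} (f : Fin n → ℝ) : HasSum (fun z => ext0 f z ^ 2) (∑ j, f j ^ 2) := by
  have h : ∀ z, ext0 f z ^ 2 = ∑ j : Fin n, if z = (j : ℤ) then f j ^ 2 else 0 := by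
    intro z
    by_cases hz : ∃ j : Fin n, z = (j : ℤ)
    · obtain ⟨j, rfl⟩ := hz
      have : ∀ k : Fin n, ((j : ℤ) = (k : ℤ)) ↔ j = k := fun k => by
        rw [Fin.ext_iff]; norm_cast
      simp [ext0, this]
    · push Not at hz
      simp [ext0, hz]
  simp only [h]
  exact hasSum_sum fun j _ => hasSum_ite_eq _ _

lemma TT_grad (N : ℕ) (v : Ix N → ℝ) (z : ℤ) :
    TT ℝ N v (z + 1) - TT ℝ N v z = ext0 (v ∘ Sum.inl) (-z - 1) - ext0 (v ∘ Sum.inl) z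
      + ext0 (v ∘ Sum.inr) z - ext0 (v ∘ Sum.inr) (z - 1) := by
  simp only [TT, ext0, Fintype.sum_sum_type, Function.comp]
  rw [add_sub_add_comm, ← Finset.sum_sub_distrib, ← Finset.sum_sub_distrib,
    ← Finset.sum_sub_distrib, add_sub_assoc, ← Finset.sum_sub_distrib]
  congr 1
  · refine Finset.sum_congr rfl fun j _ => ?_
    simp only [tc, Sum.elim_inl]
    split_ifs <;> first | omega | simp
  · refine Finset.sum_congr rfl fun j _ => ?_
    simp only [tc, Sum.elim_inr]
    split_ifs <;> first | omega | simp

lemma TT_grad_sum (N : ℕ) (v : Ix N → ℝ) :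
    Summable (fun i => (TT ℝ N v (i + 1) - TT ℝ N v i) ^ 2) ∧
    ∑' i, (TT ℝ N v (i + 1) - TT ℝ N v i) ^ 2 ≤ 8 * ∑ i, v i ^ 2 := by
  have a1 := ext0_sq (v ∘ Sum.inl)
  have a2 := ext0_sq (v ∘ Sum.inr)
  have b1 : HasSum (fun z : ℤ => ext0 (v ∘ Sum.inl) (-z - 1) ^ 2) (∑ j, (v ∘ Sum.inl) j ^ 2) :=
    ((Equiv.neg ℤ).trans (Equiv.subRight 1)).hasSum_iff (f := fun z => ext0 (v ∘ Sum.inl) z ^ 2) |>.2 a1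
  have b2 : HasSum (fun z : ℤ => ext0 (v ∘ Sum.inr) (z - 1) ^ 2) (∑ j, (v ∘ Sum.inr) j ^ 2) :=
    (Equiv.subRight (1 : ℤ)).hasSum_iff (f := fun z => ext0 (v ∘ Sum.inr) z ^ 2) |>.2 a2
  have H := (((b1.add a1).add a2).add b2).mul_left 4
  have hle : ∀ i, (TT ℝ N v (i + 1) - TT ℝ N v i) ^ 2 ≤ 4 * (ext0 (v ∘ Sum.inl) (-i - 1) ^ 2
      + ext0 (v ∘ Sum.inl) i ^ 2 + ext0 (v ∘ Sum.inr) i ^ 2 + ext0 (v ∘ Sum.inr) (i - 1) ^ 2) := by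
    intro i
    rw [TT_grad]
    generalize ext0 (v ∘ Sum.inl) (-i - 1) = a
    generalize ext0 (v ∘ Sum.inl) i = b
    generalize ext0 (v ∘ Sum.inr) i = c
    generalize ext0 (v ∘ Sum.inr) (i - 1) = d
    nlinarith [sq_nonneg (a + b), sq_nonneg (a - c), sq_nonneg (a + d), sq_nonneg (b + c),
      sq_nonneg (b - d), sq_nonneg (c + d)]
  have hS := Summable.of_nonneg_of_le (fun i => sq_nonneg _) hle H.summable
  refine ⟨hS, (hasSum_le hle hS.hasSum H).trans_eq ?_⟩
  simp only [Fintype.sum_sum_type, Function.comp]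
  ring


/-- Diagonal bilinear form. -/
noncomputable def diagB {ι : Type*} [Fintype ι] (d : ι → ℝ) : LinearMap.BilinForm ℝ (ι → ℝ) :=
  LinearMap.mk₂ ℝ (fun v w => ∑ i, d i * (v i * w i))
    (fun v v' w => by
      rw [← Finset.sum_add_distrib]
      exact Finset.sum_congr rfl fun i _ => by simp only [Pi.add_apply]; ring)
    (fun c v w => by
      rw [smul_eq_mul, Finset.mul_sum]
      exact Finset.sum_congr rfl fun i _ => by simp only [Pi.smul_apply, smul_eq_mul]; ring)
    (fun v w w' => by
      rw [← Finset.sum_add_distrib]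
      exact Finset.sum_congr rfl fun i _ => by simp only [Pi.add_apply]; ring)
    (fun c v w => by
      rw [smul_eq_mul, Finset.mul_sum]
      exact Finset.sum_congr rfl fun i _ => by simp only [Pi.smul_apply, smul_eq_mul]; ring)

lemma diagB_apply {ι : Type*} [Fintype ι] (d : ι → ℝ) (v w : ι → ℝ) :
    diagB d v w = ∑ i, d i * (v i * w i) := rfl

lemma TTen_summable (α : ℝ) (hα : 3 < α) (N : ℕ) (v w : Ix N → ℝ) :
    Summable (en α (TT ℝ N v) (TT ℝ N w)) :=
  en_summable α hα _ _ (TT_grad_sum N v).1 (TT_grad_sum N w).1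

/-- The energy as a bilinear form in the coordinates. -/
noncomputable def enB (β α : ℝ) (hα : 3 < α) (N : ℕ) : LinearMap.BilinForm ℝ (Ix N → ℝ) :=
  LinearMap.mk₂ ℝ (fun v w => β * ∑' p, en α (TT ℝ N v) (TT ℝ N w) p)
    (fun v v' w => by
      rw [← mul_add, ← (TTen_summable α hα N v w).tsum_add (TTen_summable α hα N v' w)]
      congr 2; funext p; simp only [en, TT_add]; ring)
    (fun c v w => by
      have h : ∀ p, en α (TT ℝ N (c • v)) (TT ℝ N w) p = c * en α (TT ℝ N v) (TT ℝ N w) p :=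
        fun p => by simp only [en, TT_smul]; ring
      simp only [h, tsum_mul_left, smul_eq_mul]; ring)
    (fun v w w' => by
      rw [← mul_add, ← (TTen_summable α hα N v w).tsum_add (TTen_summable α hα N v w')]
      congr 2; funext p; simp only [en, TT_add]; ring)
    (fun c v w => by
      have h : ∀ p, en α (TT ℝ N v) (TT ℝ N (c • w)) p = c * en α (TT ℝ N v) (TT ℝ N w) p :=
        fun p => by simp only [en, TT_smul]; ring
      simp only [h, tsum_mul_left, smul_eq_mul]; ring)

lemma enB_apply (β α : ℝ) (hα : 3 < α) (N : ℕ) (v w : Ix N → ℝ) :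
    enB β α hα N v w = β * ∑' p, en α (TT ℝ N v) (TT ℝ N w) p := rfl

lemma enB_symm (β α : ℝ) (hα : 3 < α) (N : ℕ) (v w : Ix N → ℝ) :
    enB β α hα N v w = enB β α hα N w v := by
  rw [enB_apply, enB_apply]
  congr 2; funext p; simp only [en]; ring

lemma enB_upper (β α : ℝ) (hβ : 0 < β) (hα : 3 < α) (N : ℕ) (v : Ix N → ℝ) :
    enB β α hα N v v ≤ diagB (fun _ => 8 * β * (Kc α + 1)) v v := by
  rw [enB_apply, diagB_apply, ← Finset.mul_sum]
  obtain ⟨h1, h2⟩ := TT_grad_sum N v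
  have h3 := (en_bound α hα _ h1).2
  have h4 := Kc_nonneg α
  have h5 : ∑ i, v i * v i = ∑ i, v i ^ 2 := Finset.sum_congr rfl fun i _ => by ring
  have h6 : 0 ≤ ∑ i, v i ^ 2 := Finset.sum_nonneg fun i _ => sq_nonneg _
  rw [h5]
  have h7 : ∑' p, en α (TT ℝ N v) (TT ℝ N v) p ≤ Kc α * (8 * ∑ i, v i ^ 2) :=
    h3.trans (mul_le_mul_of_nonneg_left h2 h4)
  calc β * ∑' p, en α (TT ℝ N v) (TT ℝ N v) p ≤ β * (Kc α * (8 * ∑ i, v i ^ 2)) :=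
        mul_le_mul_of_nonneg_left h7 hβ.le
    _ ≤ 8 * β * (Kc α + 1) * ∑ i, v i ^ 2 := by nlinarith [mul_nonneg hβ.le h6]

/-- Coefficients of the lower diagonal form. -/
noncomputable def dlow (β α : ℝ) (N : ℕ) : Ix N → ℝ :=
  Sum.elim (fun _ => β) (fun j => β / |((((j : ℕ) : ℤ) + 1 - (-(((j : ℕ) : ℤ) + 1)) : ℤ) : ℝ)| ^ α)

/-- The pairs used for the lower bound on the energy. -/
def gpair (N : ℕ) : Ix N → ℤ × ℤ :=
  Sum.elim (fun j => (-((j : ℕ) : ℤ), -((j : ℕ) : ℤ) - 1))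
    (fun j => (((j : ℕ) : ℤ) + 1, -(((j : ℕ) : ℤ) + 1)))

lemma gpair_inj (N : ℕ) : Function.Injective (gpair N) := by
  rintro (i | i) (j | j) h <;> simp only [gpair, Sum.elim_inl, Sum.elim_inr, Prod.mk.injEq] at h
  · congr 1; apply Fin.ext; omega
  · omega
  · omega
  · congr 1; apply Fin.ext; omega

lemma enB_lower (β α : ℝ) (hβ : 0 < β) (hα : 3 < α) (N : ℕ) (v : Ix N → ℝ) :
    diagB (dlow β α N) v v ≤ enB β α hα N v v := by
  rw [enB_apply, diagB_apply]
  have hs := TTen_summable α hα N v v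
  have h1 : ∑ i, en α (TT ℝ N v) (TT ℝ N v) (gpair N i) ≤ ∑' p, en α (TT ℝ N v) (TT ℝ N v) p := by
    have := hs.sum_le_tsum (Finset.univ.map ⟨gpair N, gpair_inj N⟩) (fun p _ => by
      simp only [en]
      exact div_nonneg (mul_self_nonneg _) (Real.rpow_nonneg (abs_nonneg _) _))
    rwa [Finset.sum_map] at this
  refine le_trans (le_of_eq ?_) (mul_le_mul_of_nonneg_left h1 hβ.le)
  rw [Finset.mul_sum]
  refine Finset.sum_congr rfl fun i _ => ?_
  rcases i with j | j
  · simp only [dlow, gpair, en, Sum.elim_inl, TT_left]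
    simp
  · simp only [dlow, gpair, en, Sum.elim_inr, TT_right]
    ring

lemma dlow_pos (β α : ℝ) (hβ : 0 < β) (N : ℕ) (i : Ix N) : 0 < dlow β α N i := by
  rcases i with j | j
  · exact hβ
  · refine div_pos hβ (Real.rpow_pos_of_pos (abs_pos.2 ?_) _)
    have : ((j : ℕ) : ℤ) + 1 - (-(((j : ℕ) : ℤ) + 1)) ≠ 0 := by omega
    exact_mod_cast this

lemma TT_cast (N : ℕ) (x : Ix N → ℤ) (z : ℤ) : ((TT ℤ N x z : ℤ) : ℝ) = TT ℝ N (castV x) z := by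
  simp [TT, castV]

lemma supp_zero (N : ℕ) (χ : ℤ → ℤ) (h0 : ∀ k : ℤ, (N : ℤ) < |k| → χ k = 0)
    (h1 : ∀ j : Fin (N + 1), χ (-((j : ℕ) : ℤ)) - χ (-((j : ℕ) : ℤ) - 1) = 0)
    (h2 : ∀ j : Fin N, χ (((j : ℕ) : ℤ) + 1) - χ (-(((j : ℕ) : ℤ) + 1)) = 0) : ∀ z, χ z = 0 := by
  have hl : ∀ k : ℕ, k ≤ N + 1 → χ (-((N : ℤ) + 1) + k) = 0 := by
    intro k
    induction k with
    | zero => intro _; apply h0; rw [lt_abs]; right; omega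
    | succ k ih =>
      intro hk
      have := h1 ⟨N - k, by omega⟩
      have e1 : (-(((N - k : ℕ)) : ℤ)) = -((N : ℤ) + 1) + (k + 1 : ℕ) := by omega
      simp only [e1] at this
      have e2 : -((N : ℤ) + 1) + (k + 1 : ℕ) - 1 = -((N : ℤ) + 1) + k := by omega
      rw [e2, ih (by omega)] at this
      omega
  have hl' : ∀ z : ℤ, z ≤ 0 → χ z = 0 := by
    intro z hz
    by_cases h : (N : ℤ) < |z|
    · exact h0 z h
    · rw [not_lt, abs_le] at h
      have := hl (z + (N + 1)).toNat (by omega)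
      have e : -((N : ℤ) + 1) + ((z + (N + 1)).toNat : ℤ) = z := by omega
      rwa [e] at this
  intro z
  by_cases hz : z ≤ 0
  · exact hl' z hz
  by_cases h : (N : ℤ) < |z|
  · exact h0 z h
  rw [not_lt, abs_le] at h
  have hN : z ≤ N := h.2
  have := h2 ⟨(z - 1).toNat, by omega⟩
  have e : (((z - 1).toNat : ℕ) : ℤ) + 1 = z := by omega
  simp only [e] at this
  rw [hl' (-z) (by omega)] at this
  omega

/-- The parametrisation as an equivalence. -/
noncomputable def cfgEquiv (N : ℕ) : (Ix N → ℤ) ≃ ChainConfig N :=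
  Equiv.ofBijective (fun x => ⟨TT ℤ N x, fun k hk => TT_supp ℤ N x k hk⟩) (by
    constructor
    · intro x y h
      have h' : TT ℤ N x = TT ℤ N y := congrArg Subtype.val h
      funext i
      rcases i with j | j
      · rw [← TT_left ℤ N x j, ← TT_left ℤ N y j, h']
      · rw [← TT_right ℤ N x j, ← TT_right ℤ N y j, h']
    · rintro ⟨φ, hφ⟩
      let x : Ix N → ℤ := Sum.elim (fun j => φ (-((j : ℕ) : ℤ)) - φ (-((j : ℕ) : ℤ) - 1))
        (fun j => φ (((j : ℕ) : ℤ) + 1) - φ (-(((j : ℕ) : ℤ) + 1)))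
      refine ⟨x, Subtype.ext ?_⟩
      funext z
      have := supp_zero N (fun z => TT ℤ N x z - φ z)
        (fun k hk => by simp only [TT_supp ℤ N x k hk, hφ k hk, sub_self])
        (fun j => by
          have := TT_left ℤ N x j
          simp only [x, Sum.elim_inl] at this ⊢
          linarith)
        (fun j => by
          have := TT_right ℤ N x j
          simp only [x, Sum.elim_inr] at this ⊢
          linarith) z
      simp only at this ⊢
      linarith)

lemma cfgEquiv_val (N : ℕ) (x : Ix N → ℤ) : (cfgEquiv N x).val = TT ℤ N x := rfl

lemma weight_eq (β α : ℝ) (hα : 3 < α) (N : ℕ) (x : Ix N → ℤ) :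
    chainWeight β α 2 (TT ℤ N x) = Real.exp (-enB β α hα N (castV x) (castV x)) := by
  rw [chainWeight, chainEnergy, enB_apply]
  congr 3
  congr 1
  funext p
  split_ifs with h
  · simp [en, h]
  · simp only [en, ← TT_cast]
    rw [Real.rpow_two, sq_abs, sq]
    push_cast
    rfl

/-- Height at the origin as a linear functional. -/
noncomputable def u0 (N : ℕ) : (Ix N → ℝ) →ₗ[ℝ] ℝ where
  toFun v := TT ℝ N v 0
  map_add' v w := TT_add ℝ N v w 0
  map_smul' c v := TT_smul ℝ N c v 0

lemma u0_apply (N : ℕ) (v : Ix N → ℝ) : u0 N v = TT ℝ N v 0 := rfl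

lemma diag_sums (N : ℕ) (d : Ix N → ℝ) (hd : ∀ i, 0 < d i) (b : ℝ) (hb : ∀ j, d (Sum.inl j) = b) :
    ∃ Z : ℝ, 0 < Z ∧
      HasSum (fun x : Ix N → ℤ => Real.exp (-diagB d (castV x) (castV x))) Z ∧
      HasSum (fun x : Ix N → ℤ => u0 N (castV x) ^ 2 * Real.exp (-diagB d (castV x) (castV x)))
        (((N : ℝ) + 1) * sg b * Z) := by
  obtain ⟨h1, h2⟩ := gauss_prod d hd (fun i => (tc N i 0 : ℝ))
  have hdg : ∀ x : Ix N → ℤ, diagB d (castV x) (castV x) = ∑ i, d i * (x i : ℝ) ^ 2 := fun x => by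
    rw [diagB_apply]
    exact Finset.sum_congr rfl fun i _ => by simp only [castV]; ring
  refine ⟨∏ i, ∑' n : ℤ, Real.exp (-(d i * (n : ℝ) ^ 2)), Finset.prod_pos fun i _ => zg_pos (d i) (hd i), ?_, ?_⟩
  · exact h1.congr_sum_val (fun x => by rw [hdg]) rfl
  · refine h2.congr_sum_val (fun x => by rw [hdg]; rfl) ?_
    congr 1
    rw [Fintype.sum_sum_type]
    have t1 : ∀ j, tc N (Sum.inl j) 0 = 1 := fun j => by simp [tc]
    have t2 : ∀ j, tc N (Sum.inr j) 0 = 0 := fun j => by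
      simp only [tc, Sum.elim_inr]; rw [if_neg]; omega
    simp [t1, t2, hb]

lemma chainVar_eq (β α : ℝ) (hα : 3 < α) (N : ℕ) :
    chainVar N β α 2 =
      (∑' x : Ix N → ℤ, u0 N (castV x) ^ 2 * Real.exp (-enB β α hα N (castV x) (castV x))) /
      (∑' x : Ix N → ℤ, Real.exp (-enB β α hα N (castV x) (castV x))) := by
  have hm : chainMean N β α 2 = 0 := by
    rw [chainMean, ← (cfgEquiv N).tsum_eq]
    simp only [cfgEquiv_val, weight_eq β α hα, TT_cast]
    rw [odd_tsum, zero_div]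
    intro x
    have : castV (-x) = - castV x := by ext i; simp [castV]
    have h0 : TT ℝ N (-castV x) 0 = -TT ℝ N (castV x) 0 := map_neg (u0 N) (castV x)
    simp [this, h0]
  rw [chainVar, hm, chainZ, ← (cfgEquiv N).tsum_eq, ← (cfgEquiv N).tsum_eq]
  simp only [cfgEquiv_val, weight_eq β α hα, TT_cast, u0_apply]
  ring

/-- **Linear delocalisation of the discrete Gaussian long-range chain for `α > 3`.**
For every `β ∈ (0,∞)` and every `α > 3` there exist constants `c_β > 0` and `C_β < ∞`
such that for every `N ≥ 1`, `c_β N ≤ Var_{N,β,α}[φ(0)] ≤ C_β N`. -/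
theorem gaussian_chain_linear_deloc_alpha_gt_three
    (β : ℝ) (hβ : 0 < β) (α : ℝ) (hα : 3 < α) :
    ∃ c C : ℝ, 0 < c ∧
      ∀ N : ℕ, 1 ≤ N →
        c * (N : ℝ) ≤ chainVar N β α 2 ∧ chainVar N β α 2 ≤ C * (N : ℝ) := by
  have hb2 : 0 < 8 * β * (Kc α + 1) := by
    have := Kc_nonneg α
    positivity
  have hc := sg_pos _ hb2
  have hC := sg_pos β hβ
  refine ⟨sg (8 * β * (Kc α + 1)), 2 * sg β, hc, fun N hN => ?_⟩
  have hN' : (1 : ℝ) ≤ N := by exact_mod_cast hN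
  obtain ⟨Z0, hZ0, a0, a2⟩ := diag_sums N (dlow β α N) (dlow_pos β α hβ N) β (fun _ => rfl)
  obtain ⟨Z1, hZ1, b0, b2⟩ := diag_sums N (fun _ => 8 * β * (Kc α + 1)) (fun _ => hb2) _ (fun _ => rfl)
  have hsy : ∀ d : Ix N → ℝ, ∀ x y, diagB d x y = diagB d y x := fun d x y => by
    rw [diagB_apply, diagB_apply]
    exact Finset.sum_congr rfl fun i _ => by ring
  have hle := enB_lower β α hβ hα N
  have e0 : Summable fun x : Ix N → ℤ => Real.exp (-enB β α hα N (castV x) (castV x)) :=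
    Summable.of_nonneg_of_le (fun _ => by positivity)
      (fun x => Real.exp_le_exp.2 (neg_le_neg (hle _))) a0.summable
  have e2 : Summable fun x : Ix N → ℤ =>
      u0 N (castV x) ^ 2 * Real.exp (-enB β α hα N (castV x) (castV x)) :=
    Summable.of_nonneg_of_le (fun _ => by positivity)
      (fun x => mul_le_mul_of_nonneg_left (Real.exp_le_exp.2 (neg_le_neg (hle _)))
        (by positivity)) a2.summable
  have m1 := gauss_mono (diagB (dlow β α N)) (enB β α hα N) (hsy _) (enB_symm β α hα N) hle (u0 N)
    a0.summable a2.summable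
  have m2 := gauss_mono (enB β α hα N) (diagB (fun _ => 8 * β * (Kc α + 1))) (enB_symm β α hα N)
    (hsy _) (enB_upper β α hβ hα N) (u0 N) e0 e2
  rw [a0.tsum_eq, a2.tsum_eq] at m1
  rw [b0.tsum_eq, b2.tsum_eq] at m2
  rw [chainVar_eq β α hα N]
  have hZ : 0 < ∑' x : Ix N → ℤ, Real.exp (-enB β α hα N (castV x) (castV x)) :=
    e0.tsum_pos (fun _ => by positivity) 0 (by positivity)
  generalize (∑' x : Ix N → ℤ, Real.exp (-enB β α hα N (castV x) (castV x))) = Z at *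
  generalize (∑' x : Ix N → ℤ, u0 N (castV x) ^ 2 *
    Real.exp (-enB β α hα N (castV x) (castV x))) = S at *
  constructor
  · rw [le_div_iff₀ hZ]
    have : ((N : ℝ) + 1) * sg (8 * β * (Kc α + 1)) * Z ≤ S := by
      refine le_of_mul_le_mul_right ?_ hZ1
      linarith
    nlinarith [mul_pos hc hZ]
  · rw [div_le_iff₀ hZ]
    have : S ≤ ((N : ℝ) + 1) * sg β * Z := by
      refine le_of_mul_le_mul_right ?_ hZ0
      linarith
    nlinarith [mul_pos hC hZ, mul_nonneg (sub_nonneg.2 hN') (mul_pos hC hZ).le]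
end

section
/- For every inverse temperature β ∈ (0,∞), every exponent q ∈ (0,2) and every range exponent α ∈ (2, 2 + q/2), there exists a constant c_β > 0 (depending only on β, α and q) such that for every integer N ≥ 1, the variance of the height at the origin under the discrete q-SOS long-range chain satisfies c_β N^{(2/q)(α−2)} ≤ Var^{q-SOS}_{N,β,α}[φ(0)]. -/
open Finset

section abstractpart
variable {V ε : Type*} [AddCommGroup V] [DecidableEq ε]

/-- decomposed weight -/
noncomputable def WS (T : Finset ε) (L : ε → V →+ ℤ) (F Ft : ε → ℤ → ℝ) (S : Finset ε) (φ : V) : ℝ :=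
  (∏ e ∈ S, Real.exp (-Ft e (L e φ))) *
    ∏ e ∈ T \ S, (Real.exp (-F e (L e φ)) - Real.exp (-Ft e (L e φ)))

noncomputable def wx (T : Finset ε) (L : ε → V →+ ℤ) (Ft : ε → ℤ → ℝ) (v : V) (φ : V) : ℝ :=
  Real.exp (-∑ e ∈ T, (Ft e (L e φ - L e v) - Ft e (L e φ)))

lemma WS_nonneg (T : Finset ε) (L : ε → V →+ ℤ) (F Ft : ε → ℤ → ℝ)
    (hF : ∀ e ∈ T, ∀ a, F e a ≤ Ft e a) (S : Finset ε) (φ : V) : 0 ≤ WS T L F Ft S φ := by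
  unfold WS
  refine mul_nonneg (prod_nonneg fun e _ => (Real.exp_pos _).le) (prod_nonneg fun e he => ?_)
  have := hF e (mem_sdiff.1 he).1 (L e φ)
  have := Real.exp_le_exp.2 (neg_le_neg this)
  linarith

lemma WS_shift (T : Finset ε) (L : ε → V →+ ℤ) (F Ft : ε → ℤ → ℝ) (S : Finset ε) (hS : S ⊆ T)
    (v : V) (hv : ∀ e ∈ T, L e v ≠ 0 → e ∈ S) (φ : V) :
    WS T L F Ft S (φ - v) = wx T L Ft v φ * WS T L F Ft S φ := by
  have h1 : ∑ e ∈ T, (Ft e (L e φ - L e v) - Ft e (L e φ))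
      = ∑ e ∈ S, (Ft e (L e φ - L e v) - Ft e (L e φ)) := by
    symm
    apply sum_subset hS
    intro e he heS
    have : L e v = 0 := by
      by_contra h
      exact heS (hv e he h)
    simp [this]
  unfold WS wx
  rw [h1, ← mul_assoc, ← sum_neg_distrib, Real.exp_sum, ← prod_mul_distrib]
  congr 1
  · refine prod_congr rfl fun e _ => ?_
    rw [← Real.exp_add, map_sub]
    congr 1
    ring
  · refine prod_congr rfl fun e he => ?_
    have : L e v = 0 := by
      by_contra h
      exact (mem_sdiff.1 he).2 (hv e (mem_sdiff.1 he).1 h)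
    simp [this]

lemma WS_sum (T : Finset ε) (L : ε → V →+ ℤ) (F Ft : ε → ℤ → ℝ) (φ : V) :
    ∑ S ∈ T.powerset, WS T L F Ft S φ = ∏ e ∈ T, Real.exp (-F e (L e φ)) := by
  unfold WS
  rw [← prod_add]
  refine prod_congr rfl fun e _ => by ring

lemma WS_sum_good (T : Finset ε) (L : ε → V →+ ℤ) (F Ft : ε → ℤ → ℝ) (v φ : V) :
    ∑ S ∈ T.powerset, (if ∀ e ∈ T, L e v ≠ 0 → e ∈ S then WS T L F Ft S φ else 0)
      = Real.exp (-∑ e ∈ T, if L e v ≠ 0 then Ft e (L e φ) - F e (L e φ) else 0) *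
        ∏ e ∈ T, Real.exp (-F e (L e φ)) := by
  have h := prod_add (fun e => Real.exp (-Ft e (L e φ)))
    (fun e => if L e v ≠ 0 then 0 else (Real.exp (-F e (L e φ)) - Real.exp (-Ft e (L e φ)))) T
  rw [← sum_neg_distrib, Real.exp_sum, ← prod_mul_distrib]
  have h2 : ∏ e ∈ T, (Real.exp (-if L e v ≠ 0 then Ft e (L e φ) - F e (L e φ) else 0) *
      Real.exp (-F e (L e φ))) = ∏ e ∈ T, (Real.exp (-Ft e (L e φ)) +
      if L e v ≠ 0 then 0 else (Real.exp (-F e (L e φ)) - Real.exp (-Ft e (L e φ)))) := by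
    refine prod_congr rfl fun e _ => ?_
    split_ifs with hh
    · rw [← Real.exp_add, add_zero]; congr 1; ring
    · simp
  rw [h2, h]
  refine sum_congr rfl fun S hS => ?_
  unfold WS
  split_ifs with hg
  · congr 1
    refine prod_congr rfl fun e he => ?_
    rw [if_neg]
    intro h
    exact (mem_sdiff.1 he).2 (hg e (mem_sdiff.1 he).1 h)
  · push Not at hg
    obtain ⟨e, he, hev, heS⟩ := hg
    symm
    apply mul_eq_zero_of_right
    apply prod_eq_zero (i := e) (mem_sdiff.2 ⟨he, heS⟩)
    simp [hev]

lemma fixedS (T : Finset ε) (L : ε → V →+ ℤ) (F Ft : ε → ℤ → ℝ) (S : Finset ε) (hS : S ⊆ T)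
    (hF : ∀ e ∈ T, ∀ a, F e a ≤ Ft e a)
    (ht : V →+ ℤ) (Y : Finset ℕ) (s : ℕ → V) (hs : ∀ x ∈ Y, ht (s x) = 1)
    (hY : ∀ x ∈ Y, ∀ e ∈ T, L e (s x) ≠ 0 → e ∈ S)
    (D : ℕ → ℕ → ℝ)
    (hD : ∀ x ∈ Y, ∀ y ∈ Y, ∀ φ : V, ∑ e ∈ T, (Ft e (L e φ) + Ft e (L e φ - L e (s x) - L e (s y))
      - Ft e (L e φ - L e (s x)) - Ft e (L e φ - L e (s y))) ≤ D x y)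
    (hsum : Summable fun φ => WS T L F Ft S φ)
    (hsum1 : Summable fun φ => (ht φ : ℝ) * WS T L F Ft S φ)
    (hsum2 : Summable fun φ => (ht φ : ℝ)^2 * WS T L F Ft S φ) (θ : ℝ) :
    2 * θ * (Y.card * ∑' φ, WS T L F Ft S φ) - θ^2 * ((∑ x ∈ Y, ∑ y ∈ Y, (Real.exp (D x y) - 1)) *
      ∑' φ, WS T L F Ft S φ) ≤ ∑' φ, (ht φ : ℝ)^2 * WS T L F Ft S φ := by
  set W := WS T L F Ft S with hW
  set M := ∑' φ, W φ with hM
  have hWM : HasSum W M := hsum.hasSum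
  have hsh : ∀ v, HasSum (fun φ => W (φ - v)) M := fun v =>
    (Equiv.hasSum_iff (Equiv.subRight v) (f := W)).2 hWM
  set H := ∑' φ, (ht φ : ℝ) * W φ with hH
  have hWH : HasSum (fun φ => (ht φ : ℝ) * W φ) H := hsum1.hasSum
  have hshH : ∀ x ∈ Y, HasSum (fun φ => (ht φ : ℝ) * W (φ - s x)) (H + M) := by
    intro x hx
    have h1 := (hWH.add hWM)
    have := (Equiv.hasSum_iff (Equiv.subRight (s x)) (f := fun φ => (ht φ : ℝ) * W φ + W φ)).2 h1
    convert this using 2 with φ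
    simp only [Function.comp, Equiv.subRight_apply, map_sub, hs x hx]
    push_cast
    ring
  have R1 : HasSum (fun φ => ∑ x ∈ Y, ((ht φ : ℝ) * W (φ - s x) - (ht φ : ℝ) * W φ))
      (∑ x ∈ Y, (H + M - H)) := hasSum_sum fun x hx => (hshH x hx).sub hWH
  have R2 : HasSum (fun φ => ∑ x ∈ Y, ∑ y ∈ Y, (Real.exp (D x y) * W (φ - (s x + s y)) - W (φ - s x)
      - W (φ - s y) + W φ)) (∑ x ∈ Y, ∑ y ∈ Y, (Real.exp (D x y) * M - M - M + M)) :=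
    hasSum_sum fun x hx => hasSum_sum fun y hy =>
      ((((hsh _).mul_left _).sub (hsh _)).sub (hsh _)).add hWM
  have R := (R1.mul_left (2 * θ)).sub (R2.mul_left (θ^2))
  have key := hasSum_le (fun φ => ?_) R hsum2.hasSum
  · refine le_trans (le_of_eq ?_) key
    congr 1
    · simp
    · rw [sum_mul]
      congr 1
      refine sum_congr rfl fun x _ => ?_
      rw [sum_mul]
      refine sum_congr rfl fun y _ => by ring
  · have hw : ∀ x ∈ Y, ∀ φ, W (φ - s x) = wx T L Ft (s x) φ * W φ := fun x hx φ =>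
      WS_shift T L F Ft S hS (s x) (hY x hx) φ
    have hW0 : 0 ≤ W φ := WS_nonneg T L F Ft hF S φ
    have e1 : ∑ x ∈ Y, ((ht φ : ℝ) * W (φ - s x) - (ht φ : ℝ) * W φ)
        = (ht φ : ℝ) * (∑ x ∈ Y, (wx T L Ft (s x) φ - 1)) * W φ := by
      rw [mul_sum, sum_mul]
      refine sum_congr rfl fun x hx => ?_
      rw [hw x hx]; ring
    have e2 : (∑ x ∈ Y, (wx T L Ft (s x) φ - 1))^2 * W φ ≤
        ∑ x ∈ Y, ∑ y ∈ Y, (Real.exp (D x y) * W (φ - (s x + s y)) - W (φ - s x)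
      - W (φ - s y) + W φ) := by
      rw [sq, sum_mul_sum, sum_mul]
      refine sum_le_sum fun x hx => ?_
      rw [sum_mul]
      refine sum_le_sum fun y hy => ?_
      rw [← sub_sub, hw y hy (φ - s x), hw x hx, hw y hy]
      have h3 : wx T L Ft (s y) φ ≤ Real.exp (D x y) * wx T L Ft (s y) (φ - s x) := by
        unfold wx
        rw [← Real.exp_add, Real.exp_le_exp]
        have := hD x hx y hy φ
        simp only [sum_sub_distrib, sum_add_distrib, map_sub] at this ⊢
        linarith
      have h4 : 0 ≤ wx T L Ft (s x) φ * W φ := mul_nonneg (Real.exp_pos _).le hW0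
      nlinarith [mul_le_mul_of_nonneg_right h3 h4]
    rw [e1]
    have e3 := mul_le_mul_of_nonneg_left e2 (sq_nonneg θ)
    have e4 : 0 ≤ ((ht φ : ℝ) - θ * ∑ x ∈ Y, (wx T L Ft (s x) φ - 1))^2 * W φ :=
      mul_nonneg (sq_nonneg _) hW0
    nlinarith

lemma abstract_bound (T : Finset ε) (L : ε → V →+ ℤ) (F Ft : ε → ℤ → ℝ)
    (hF : ∀ e ∈ T, ∀ a, F e a ≤ Ft e a)
    (ht : V →+ ℤ) (X : Finset ℕ) (s : ℕ → V) (hs : ∀ x ∈ X, ht (s x) = 1)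
    (D : ℕ → ℕ → ℝ) (hD0 : ∀ x ∈ X, ∀ y ∈ X, 0 ≤ D x y)
    (hD : ∀ x ∈ X, ∀ y ∈ X, ∀ φ : V, ∑ e ∈ T, (Ft e (L e φ) + Ft e (L e φ - L e (s x) - L e (s y))
      - Ft e (L e φ - L e (s x)) - Ft e (L e φ - L e (s y))) ≤ D x y)
    (κ : ℝ) (hκ : ∀ x ∈ X, ∀ φ, (∑ e ∈ T, if L e (s x) ≠ 0 then Ft e (L e φ) - F e (L e φ) else 0) ≤ κ)
    (hsum : Summable fun φ => (1 + (ht φ : ℝ)^2) * ∏ e ∈ T, Real.exp (-F e (L e φ)))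
    (θ : ℝ) (hθ : 0 ≤ θ) :
    (2 * θ * X.card * Real.exp (-κ) - θ^2 * ∑ x ∈ X, ∑ y ∈ X, (Real.exp (D x y) - 1)) *
      ∑' φ, ∏ e ∈ T, Real.exp (-F e (L e φ)) ≤
      ∑' φ, (ht φ : ℝ)^2 * ∏ e ∈ T, Real.exp (-F e (L e φ)) := by
  have hWU : ∀ S ∈ T.powerset, ∀ φ, WS T L F Ft S φ ≤ ∏ e ∈ T, Real.exp (-F e (L e φ)) := by
    intro S hS φ
    rw [← WS_sum T L F Ft]
    exact single_le_sum (f := fun S => WS T L F Ft S φ) (fun S _ => WS_nonneg T L F Ft hF S φ) hS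
  have hW0 := WS_nonneg T L F Ft hF
  have hint : ∀ a : ℤ, |(a:ℝ)| ≤ 1 + (a:ℝ)^2 := by
    intro a
    nlinarith [sq_abs (a:ℝ), sq_nonneg (|(a:ℝ)| - 1)]
  have hs0 : ∀ S ∈ T.powerset, Summable fun φ => WS T L F Ft S φ := by
    intro S hS
    refine Summable.of_nonneg_of_le (fun φ => hW0 S φ) (fun φ => ?_) hsum
    nlinarith [hWU S hS φ, hW0 S φ, sq_nonneg (ht φ : ℝ)]
  have hs2 : ∀ S ∈ T.powerset, Summable fun φ => (ht φ : ℝ)^2 * WS T L F Ft S φ := by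
    intro S hS
    refine Summable.of_nonneg_of_le (fun φ => mul_nonneg (sq_nonneg _) (hW0 S φ)) (fun φ => ?_) hsum
    nlinarith [hWU S hS φ, hW0 S φ, sq_nonneg (ht φ : ℝ),
      mul_le_mul_of_nonneg_left (hWU S hS φ) (sq_nonneg (ht φ : ℝ))]
  have hs1 : ∀ S ∈ T.powerset, Summable fun φ => (ht φ : ℝ) * WS T L F Ft S φ := by
    intro S hS
    refine Summable.of_norm_bounded hsum (fun φ => ?_)
    rw [Real.norm_eq_abs, abs_mul, abs_of_nonneg (hW0 S φ)]
    exact mul_le_mul (hint _) (hWU S hS φ) (hW0 S φ) (by positivity)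
  let Y : Finset ε → Finset ℕ := fun S => X.filter fun x => ∀ e ∈ T, L e (s x) ≠ 0 → e ∈ S
  set KK := ∑ x ∈ X, ∑ y ∈ X, (Real.exp (D x y) - 1) with hKK
  have hM0 : ∀ S, 0 ≤ ∑' φ, WS T L F Ft S φ := fun S => tsum_nonneg (hW0 S)
  have step : ∀ S ∈ T.powerset, 2 * θ * ((Y S).card * ∑' φ, WS T L F Ft S φ)
      - θ^2 * (KK * ∑' φ, WS T L F Ft S φ) ≤ ∑' φ, (ht φ : ℝ)^2 * WS T L F Ft S φ := by
    intro S hS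
    have hYX : Y S ⊆ X := filter_subset _ _
    have := fixedS T L F Ft S (mem_powerset.1 hS) hF ht (Y S) s (fun x hx => hs x (hYX hx))
      (fun x hx => (mem_filter.1 hx).2) D (fun x hx y hy => hD x (hYX hx) y (hYX hy))
      (hs0 S hS) (hs1 S hS) (hs2 S hS) θ
    refine le_trans ?_ this
    have h5 : ∑ x ∈ Y S, ∑ y ∈ Y S, (Real.exp (D x y) - 1) ≤ KK := by
      have hpos : ∀ x ∈ X, ∀ y ∈ X, 0 ≤ Real.exp (D x y) - 1 := fun x hx y hy => by
        have := Real.one_le_exp (hD0 x hx y hy); linarith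
      refine (sum_le_sum fun x hx => sum_le_sum_of_subset_of_nonneg hYX
        fun y hy _ => hpos x (hYX hx) y hy).trans ?_
      exact sum_le_sum_of_subset_of_nonneg hYX fun x hx _ => sum_nonneg fun y hy => hpos x hx y hy
    have := mul_le_mul_of_nonneg_left (mul_le_mul_of_nonneg_right h5 (hM0 S)) (sq_nonneg θ)
    linarith
  have tot := sum_le_sum step
  have t1 : ∑ S ∈ T.powerset, ∑' φ, (ht φ : ℝ)^2 * WS T L F Ft S φ
      = ∑' φ, (ht φ : ℝ)^2 * ∏ e ∈ T, Real.exp (-F e (L e φ)) := by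
    rw [← Summable.tsum_finsetSum hs2]
    refine tsum_congr fun φ => ?_
    rw [← mul_sum, WS_sum]
  have t2 : ∑ S ∈ T.powerset, ∑' φ, WS T L F Ft S φ
      = ∑' φ, ∏ e ∈ T, Real.exp (-F e (L e φ)) := by
    rw [← Summable.tsum_finsetSum hs0]
    refine tsum_congr fun φ => ?_
    rw [WS_sum]
  have hU : Summable fun φ => ∏ e ∈ T, Real.exp (-F e (L e φ)) := by
    have := summable_sum hs0
    refine this.congr fun φ => ?_
    rw [WS_sum]
  have t3 : X.card * (Real.exp (-κ) * ∑' φ, ∏ e ∈ T, Real.exp (-F e (L e φ))) ≤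
      ∑ S ∈ T.powerset, ((Y S).card * ∑' φ, WS T L F Ft S φ) := by
    have a1 : ∀ S, ((Y S).card : ℝ) * ∑' φ, WS T L F Ft S φ = ∑ x ∈ X,
        if ∀ e ∈ T, L e (s x) ≠ 0 → e ∈ S then ∑' φ, WS T L F Ft S φ else 0 := by
      intro S
      rw [← sum_filter, sum_const, nsmul_eq_mul]
    simp_rw [a1]
    rw [sum_comm, ← nsmul_eq_mul, ← sum_const]
    refine sum_le_sum fun x hx => ?_
    have a2 : ∀ S ∈ T.powerset, Summable fun φ =>
        (if ∀ e ∈ T, L e (s x) ≠ 0 → e ∈ S then WS T L F Ft S φ else 0) := by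
      intro S hS
      by_cases h : ∀ e ∈ T, L e (s x) ≠ 0 → e ∈ S
      · simp only [if_pos h]; exact hs0 S hS
      · simp only [if_neg h]; exact summable_zero
    have a3 : ∀ S, (if ∀ e ∈ T, L e (s x) ≠ 0 → e ∈ S then ∑' φ, WS T L F Ft S φ else 0)
        = ∑' φ, (if ∀ e ∈ T, L e (s x) ≠ 0 → e ∈ S then WS T L F Ft S φ else 0) := by
      intro S
      by_cases h : ∀ e ∈ T, L e (s x) ≠ 0 → e ∈ S
      · simp only [if_pos h]
      · simp only [if_neg h, tsum_zero]
    simp_rw [a3]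
    rw [← Summable.tsum_finsetSum a2, ← tsum_mul_left]
    refine Summable.tsum_le_tsum (fun φ => ?_) (hU.mul_left _) (summable_sum a2)
    rw [WS_sum_good]
    refine mul_le_mul_of_nonneg_right ?_ (prod_nonneg fun e _ => (Real.exp_pos _).le)
    exact Real.exp_le_exp.2 (neg_le_neg (hκ x hx φ))
  rw [t1, sum_sub_distrib, ← mul_sum, ← mul_sum, ← mul_sum, t2] at tot
  have := mul_le_mul_of_nonneg_left t3 (by positivity : 0 ≤ 2 * θ)
  refine le_trans ?_ tot
  linarith
end abstractpart

noncomputable def sm (q B : ℝ) (a : ℤ) : ℝ := ((a:ℝ)^2 + B^(2/q))^(q/2)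

lemma abs_rpow_eq_sq (q : ℝ) (a : ℝ) : |a|^q = (a^2)^(q/2) := by
  rw [← sq_abs, ← Real.rpow_natCast, ← Real.rpow_mul (abs_nonneg a)]
  congr 1; push_cast; ring

lemma sm_lower (q B : ℝ) (hq : 0 < q) (hB : 0 < B) (a : ℤ) : |(a:ℝ)|^q ≤ sm q B a := by
  rw [abs_rpow_eq_sq]
  unfold sm
  refine Real.rpow_le_rpow (sq_nonneg _) ?_ (by positivity)
  have : 0 < B^(2/q) := by positivity
  linarith

lemma sm_upper (q B : ℝ) (hq : 0 < q) (hq2 : q < 2) (hB : 0 < B) (a : ℤ) :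
    sm q B a ≤ |(a:ℝ)|^q + B := by
  rw [abs_rpow_eq_sq]
  unfold sm
  have h := Real.rpow_add_le_add_rpow (sq_nonneg (a:ℝ)) (by positivity : 0 ≤ B^(2/q)) (by positivity : 0 ≤ q/2) (by linarith)
  refine h.trans (le_of_eq ?_)
  congr 1
  rw [← Real.rpow_mul hB.le]
  have : 2/q*(q/2) = 1 := by field_simp
  rw [this, Real.rpow_one]

lemma sm_second (q B : ℝ) (hq : 0 < q) (hq2 : q < 2) (hB : 0 < B) (a b : ℤ) (hb : b^2 ≤ 1) :
    sm q B a + sm q B (a - b - b) - sm q B (a - b) - sm q B (a - b) ≤ min 2 (q * B^(-(2/q-1))) := by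
  unfold sm
  have hb' : (b:ℝ)^2 ≤ 1 := by exact_mod_cast hb
  set A := B^(2/q) with hA
  have hA0 : 0 < A := by positivity
  set m : ℝ := (a:ℝ) - b with hm
  set u := m^2 + A with hu
  have hu0 : 0 < u := by positivity
  have hc := Real.concaveOn_rpow (by positivity : 0 ≤ q/2) (by linarith : q/2 ≤ 1)
  have hx1 : (a:ℝ)^2 + A ∈ Set.Ici (0:ℝ) := by
    rw [Set.mem_Ici]; positivity
  have hx2 : (((a - b - b : ℤ)):ℝ)^2 + A ∈ Set.Ici (0:ℝ) := by
    rw [Set.mem_Ici]; positivity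
  obtain ⟨_, hc2⟩ := hc
  have h1 := hc2 hx1 hx2 (by norm_num : (0:ℝ) ≤ 1/2) (by norm_num : (0:ℝ) ≤ 1/2) (by norm_num)
  simp only [smul_eq_mul] at h1
  have h2 : 1/2 * ((a:ℝ)^2 + A) + 1/2 * ((((a - b - b : ℤ)):ℝ)^2 + A) = u + (b:ℝ)^2 := by
    rw [hu, hm]; push_cast; ring
  rw [h2] at h1
  have h3 : (u + (b:ℝ)^2)^(q/2) ≤ (u+1)^(q/2) :=
    Real.rpow_le_rpow (by positivity) (by linarith) (by positivity)
  have e : ((((a - b : ℤ)):ℝ)^2 + A) = u := by rw [hu, hm]; push_cast; ring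
  rw [e]
  apply le_min
  · have h := Real.rpow_add_le_add_rpow hu0.le zero_le_one (by positivity : 0 ≤ q/2) (by linarith)
    rw [Real.one_rpow] at h
    linarith
  · have h4 : (u+1)^(q/2) ≤ u^(q/2) + q/2 * u^(q/2-1) := by
      have h := rpow_one_add_le_one_add_mul_self (s := 1/u) (by have : 0 < 1/u := by positivity
                                                                linarith) (by positivity : 0 ≤ q/2) (by linarith)
      have e2 : u + 1 = u * (1 + 1/u) := by field_simp
      rw [e2, Real.mul_rpow hu0.le (by positivity), Real.rpow_sub_one hu0.ne']
      have := mul_le_mul_of_nonneg_left h (by positivity : 0 ≤ u^(q/2))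
      refine this.trans (le_of_eq ?_)
      field_simp
    have h5 : u^(q/2-1) ≤ A^(q/2-1) :=
      Real.rpow_le_rpow_of_nonpos hA0 (by rw [hu]; nlinarith [sq_nonneg m]) (by linarith)
    have h6 : A^(q/2-1) = B^(-(2/q-1)) := by
      rw [hA, ← Real.rpow_mul hB.le]
      congr 1
      field_simp
      ring
    rw [← h6]
    nlinarith

lemma sum_rpow_le (t : ℝ) (ht0 : 0 ≤ t) (ht : t < 1) (R : ℕ) :
    ∑ r ∈ Icc 1 R, (r:ℝ)^(-t) ≤ (R:ℝ)^(1-t) / (1-t) := by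
  induction R with
  | zero => simp; positivity
  | succ n ih =>
    rw [sum_Icc_succ_top (by omega)]
    have h1 : (0:ℝ) < 1 - t := by linarith
    have key : (n:ℝ)^(1-t) + (1-t) * ((n+1:ℕ):ℝ)^(-t) ≤ ((n+1:ℕ):ℝ)^(1-t) := by
      set k : ℝ := ((n+1:ℕ):ℝ) with hk
      have hk0 : 0 < k := by rw [hk]; positivity
      have hk1 : 1 ≤ k := by rw [hk]; push_cast; linarith [(Nat.cast_nonneg n : (0:ℝ) ≤ n)]
      have e1 : (n:ℝ) = k * (1 + (-(1/k))) := by rw [hk]; push_cast; field_simp; ring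
      have hle : 1/k ≤ 1 := by rw [div_le_one hk0]; exact hk1
      have h := rpow_one_add_le_one_add_mul_self (s := -(1/k)) (by linarith) h1.le (by linarith)
      rw [e1, Real.mul_rpow hk0.le (by linarith)]
      have e2 : k^(-t) = k^(1-t) / k := by
        rw [← Real.rpow_sub_one hk0.ne']; congr 1; ring
      rw [e2]
      have := mul_le_mul_of_nonneg_left h (by positivity : 0 ≤ k^(1-t))
      have e3 : k ^ (1 - t) * (1 + (1 - t) * -(1 / k)) = k^(1-t) - (1-t) * (k^(1-t)/k) := by ring
      linarith
    rw [le_div_iff₀ h1] at ih ⊢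
    nlinarith

lemma sum_rpow_const (t : ℝ) (ht : 1 < t) : ∃ C, 0 < C ∧ ∀ R : ℕ, 
    ∑ r ∈ Icc 1 R, (r:ℝ)^(-t) ≤ C := by
  refine ⟨∑' r : ℕ, (r:ℝ)^(-t) + 1, ?_, fun R => ?_⟩
  · have : 0 ≤ ∑' r : ℕ, (r:ℝ)^(-t) := tsum_nonneg fun r => by positivity
    linarith
  · have := Summable.sum_le_tsum (Icc 1 R) (fun r _ => by positivity) (Real.summable_nat_rpow.2 (by linarith : -t < -1))
    linarith

lemma tail_nat (α : ℝ) (hα : 1 < α) (N : ℕ) (hN : 1 ≤ N) (n : ℕ) :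
    ∑ k ∈ range n, (if N < k then (k:ℝ)^(-α) else 0) ≤ (N:ℝ)^(1-α) / (α-1) := by
  have h1 : 0 < α - 1 := by linarith
  have main : ∀ n, N < n → ∑ k ∈ range n, (if N < k then (k:ℝ)^(-α) else 0) ≤
      ((N:ℝ)^(1-α) - ((n-1:ℕ):ℝ)^(1-α)) / (α-1) := by
    intro n hn
    induction n, hn using Nat.le_induction with
    | base =>
      rw [sum_eq_zero]
      · simp
      · intro k hk
        rw [if_neg]; have := mem_range.1 hk; omega
    | succ n hn ih =>
      rw [sum_range_succ, if_pos (by omega)]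
      have hn2 : 2 ≤ n := by omega
      set k : ℝ := (n:ℝ) with hk
      have hk2 : 2 ≤ k := by rw [hk]; exact_mod_cast hn2
      have hk0 : 0 < k := by linarith
      have e0 : ((n-1:ℕ):ℝ) = k - 1 := by rw [Nat.cast_sub (by omega)]; simp [hk]
      have e00 : ((n+1-1:ℕ):ℝ) = k := by simp [hk]
      rw [e0] at ih
      rw [e00]
      have key : k^(1-α) + (α-1) * k^(-α) ≤ (k-1)^(1-α) := by
        have hinv : 1/k ≤ 1/2 := one_div_le_one_div_of_le (by norm_num) hk2
        have hinv0 : 0 < 1/k := by positivity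
        have e1 : k - 1 = k * (1 - 1/k) := by field_simp
        have hx : 0 < 1 - 1/k := by linarith
        rw [e1, Real.mul_rpow hk0.le hx.le]
        have h2 : 1 + (α-1) * (1/k) ≤ (1-1/k)^(1-α) := by
          rw [Real.rpow_def_of_pos hx]
          have hl := Real.log_le_sub_one_of_pos hx
          have : (α-1)*(1/k) ≤ Real.log (1-1/k) * (1-α) := by nlinarith
          have h3 := Real.add_one_le_exp (Real.log (1-1/k) * (1-α))
          linarith
        have e2 : k^(-α) = k^(1-α) / k := by
          rw [← Real.rpow_sub_one hk0.ne']; congr 1; ring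
        rw [e2]
        have := mul_le_mul_of_nonneg_left h2 (by positivity : 0 ≤ k^(1-α))
        have e3 : k ^ (1 - α) * (1 + (α-1) * (1 / k)) = k^(1-α) + (α-1) * (k^(1-α)/k) := by ring
        linarith
      rw [le_div_iff₀ h1] at ih ⊢
      nlinarith
  by_cases hn : N < n
  · refine (main n hn).trans ?_
    gcongr
    have : (0:ℝ) ≤ ((n-1:ℕ):ℝ)^(1-α) := by positivity
    linarith
  · rw [sum_eq_zero]
    · positivity
    · intro k hk
      rw [if_neg]; have := mem_range.1 hk; omega

noncomputable def kap (N : ℕ) (α : ℝ) (i : ℤ) : ℝ :=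
  ∑' j : ℤ, if (N:ℤ) < |j| then |((i-j:ℤ):ℝ)|^(-α) else 0

lemma summable_int_rpow (α : ℝ) (hα : 1 < α) : Summable fun j : ℤ => |(j:ℝ)|^(-α) := by
  apply Summable.of_nat_of_neg
  · simpa using Real.summable_nat_rpow.2 (by linarith : -α < -1)
  · simpa using Real.summable_nat_rpow.2 (by linarith : -α < -1)

lemma summable_kap (N : ℕ) (α : ℝ) (hα : 1 < α) (i : ℤ) :
    Summable fun j : ℤ => if (N:ℤ) < |j| then |((i-j:ℤ):ℝ)|^(-α) else 0 := by
  have h := (Equiv.summable_iff (Equiv.subLeft i)).2 (summable_int_rpow α hα)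
  refine Summable.of_nonneg_of_le (fun j => ?_) (fun j => ?_) h
  · split_ifs <;> positivity
  · simp only [Function.comp, Equiv.subLeft_apply]
    split_ifs
    · exact le_refl _
    · positivity

lemma kap_nonneg (N : ℕ) (α : ℝ) (i : ℤ) : 0 ≤ kap N α i :=
  tsum_nonneg fun j => by split_ifs <;> positivity

lemma kap_pos (N : ℕ) (α : ℝ) (hα : 1 < α) (i : ℤ) (hi : |i| ≤ N) : 0 < kap N α i := by
  have := (summable_kap N α hα i).tsum_pos (fun j => by split_ifs <;> positivity) (N+1) (by
    have h1 : (N:ℤ) < |(N:ℤ)+1| := by rw [abs_of_nonneg (by positivity)]; omega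
    rw [if_pos h1]
    have : i - (N+1) ≠ 0 := by have := abs_le.1 hi; omega
    have : ((i - (N+1) : ℤ):ℝ) ≠ 0 := by exact_mod_cast this
    have := abs_pos.2 this
    positivity)
  exact this

lemma kap_le (α : ℝ) (hα : 1 < α) (N : ℕ) (hN : 1 ≤ N) (i : ℤ) (hi : 2 * |i| ≤ N) :
    kap N α i ≤ (2 * 2^α / (α-1)) * (N:ℝ)^(1-α) := by
  have hs : Summable fun j : ℤ => if (N:ℤ) < |j| then |(j:ℝ)|^(-α) else 0 := by
    refine Summable.of_nonneg_of_le (fun j => ?_) (fun j => ?_) (summable_int_rpow α hα)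
    · split_ifs <;> positivity
    · split_ifs
      · exact le_refl _
      · positivity
  have h1 : kap N α i ≤ ∑' j : ℤ, 2^α * if (N:ℤ) < |j| then |(j:ℝ)|^(-α) else 0 := by
    refine Summable.tsum_le_tsum (fun j => ?_) (summable_kap N α hα i) (hs.mul_left _)
    split_ifs with h
    · have hj : (0:ℝ) < |(j:ℝ)| := by
        have : (0:ℤ) < |j| := by omega
        exact_mod_cast this
      have h3 : |j| ≤ 2 * |i - j| := by
        have := abs_sub_abs_le_abs_sub j i
        rw [abs_sub_comm j i] at this
        omega
      have h4 : |(j:ℝ)| ≤ 2 * |((i-j:ℤ):ℝ)| := by exact_mod_cast h3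
      have : |(j:ℝ)|/2 ≤ |((i-j:ℤ):ℝ)| := by linarith
      have := Real.rpow_le_rpow_of_nonpos (by positivity) this (by linarith : -α ≤ 0)
      refine this.trans (le_of_eq ?_)
      rw [Real.div_rpow hj.le (by norm_num), Real.rpow_neg (by norm_num : (0:ℝ) ≤ 2)]
      field_simp
    · simp
  refine h1.trans ?_
  rw [tsum_mul_left]
  have hnat : Summable fun k : ℕ => if N < k then (k:ℝ)^(-α) else 0 := by
    refine Summable.of_nonneg_of_le (fun j => ?_) (fun j => ?_) (Real.summable_nat_rpow.2 (by linarith : -α < -1))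
    · split_ifs <;> positivity
    · split_ifs
      · exact le_refl _
      · positivity
  have ht : ∑' k : ℕ, (if N < k then (k:ℝ)^(-α) else 0) ≤ (N:ℝ)^(1-α) / (α-1) :=
    Real.tsum_le_of_sum_range_le (fun k => by split_ifs <;> positivity) (tail_nat α hα N hN)
  have h0 : 0 ≤ ∑' k : ℕ, (if N < k then (k:ℝ)^(-α) else 0) := tsum_nonneg fun k => by split_ifs <;> positivity
  have hz : ∑' j : ℤ, (if (N:ℤ) < |j| then |(j:ℝ)|^(-α) else 0) = 
      ∑' k : ℕ, (if N < k then (k:ℝ)^(-α) else 0) + ∑' k : ℕ, (if N < k then (k:ℝ)^(-α) else 0) := by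
    have H : HasSum (fun k : ℕ => if N < k then (k:ℝ)^(-α) else 0) (∑' k : ℕ, (if N < k then (k:ℝ)^(-α) else 0)) := hnat.hasSum
    have := HasSum.of_nat_of_neg (f := fun j : ℤ => (if (N:ℤ) < |j| then |(j:ℝ)|^(-α) else 0)) 
      (by simpa using H) (by simpa using H)
    rw [this.tsum_eq]
    simp
  rw [hz]
  have : (2 * 2^α / (α-1)) * (N:ℝ)^(1-α) = 2^α * ((N:ℝ)^(1-α) / (α-1) + (N:ℝ)^(1-α) / (α-1)) := by ring
  rw [this]
  gcongr

lemma summable_h (c q : ℝ) (hc : 0 < c) (hq : 0 < q) :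
    Summable fun a : ℤ => (1 + (a:ℝ)^2) * Real.exp (-(c * |(a:ℝ)|^q)) := by
  have hn : Summable fun a : ℕ => (1 + (a:ℝ)^2) * Real.exp (-(c * (a:ℝ)^q)) := by
    have h1 := (isLittleO_exp_neg_mul_rpow_atTop hc (-4/q)).comp_tendsto
      ((tendsto_rpow_atTop hq).comp tendsto_natCast_atTop_atTop)
    have h3 : (fun a : ℕ => (1 + (a:ℝ)^2)) =O[Filter.atTop] (fun a : ℕ => (a:ℝ)^(2:ℝ)) := by
      apply Asymptotics.IsBigO.of_bound 2
      filter_upwards [Filter.eventually_ge_atTop 1] with a ha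
      have : (1:ℝ) ≤ a := by exact_mod_cast ha
      rw [Real.norm_of_nonneg (by positivity), Real.norm_of_nonneg (by positivity)]
      norm_num
      nlinarith
    have h4 := h3.mul h1.isBigO
    apply summable_of_isBigO_nat (Real.summable_nat_rpow.2 (by norm_num : (-2:ℝ) < -1))
    refine (Asymptotics.IsBigO.congr' h4 ?_ ?_)
    · filter_upwards with a
      simp
    · filter_upwards [Filter.eventually_ge_atTop 1] with a ha
      have : (0:ℝ) < a := by exact_mod_cast ha
      simp only [Function.comp]
      rw [← Real.rpow_mul this.le, ← Real.rpow_add this]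
      congr 1
      field_simp
      norm_num
  apply Summable.of_nat_of_neg
  · simpa using hn
  · simpa using hn

lemma summable_pi_fin (h : ℤ → ℝ) (h0 : ∀ a, 0 ≤ h a) (hs : Summable h) (n : ℕ) :
    Summable fun f : Fin n → ℤ => ∏ i, h (f i) := by
  induction n with
  | zero => exact Summable.of_finite
  | succ n ih =>
    rw [← Equiv.summable_iff (Fin.consEquiv (fun _ : Fin (n+1) => ℤ))]
    have := hs.mul_of_nonneg ih h0 (fun f => prod_nonneg fun i _ => h0 _)
    refine this.congr fun x => ?_
    simp [Fin.prod_univ_succ, Fin.consEquiv]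

lemma summable_pi {ι : Type*} [Fintype ι] (h : ℤ → ℝ) (h0 : ∀ a, 0 ≤ h a) (hs : Summable h) :
    Summable fun f : ι → ℤ => ∏ i, h (f i) := by
  have := summable_pi_fin h h0 hs (Fintype.card ι)
  rw [← Equiv.summable_iff ((Fintype.equivFin ι).arrowCongr (Equiv.refl ℤ))] at this
  refine this.congr fun f => ?_
  simp only [Function.comp]
  rw [← Equiv.prod_comp (Fintype.equivFin ι)]
  simp

noncomputable def cbox (N : ℕ) : Finset ℤ := Icc (-(N:ℤ)) N

lemma mem_cbox (N : ℕ) (i : ℤ) : i ∈ cbox N ↔ |i| ≤ N := by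
  unfold cbox; rw [mem_Icc, abs_le]

noncomputable def stp (x : ℕ) (k : ℤ) : ℤ := if |k| ≤ x then 1 else 0

lemma hasSum_energy (N : ℕ) (α q : ℝ) (hα : 1 < α) (hq : 0 < q) (φ : ℤ → ℤ)
    (hφ : ∀ k : ℤ, (N : ℤ) < |k| → φ k = 0) :
    HasSum (fun p : ℤ × ℤ => |((φ p.1 - φ p.2 : ℤ) : ℝ)| ^ q * |((p.1 - p.2 : ℤ) : ℝ)| ^ (-α))
      (∑ p ∈ cbox N ×ˢ cbox N, |((φ p.1 - φ p.2 : ℤ) : ℝ)| ^ q * |((p.1 - p.2 : ℤ) : ℝ)| ^ (-α) +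
        (∑ i ∈ cbox N, |(φ i : ℝ)|^q * kap N α i + ∑ i ∈ cbox N, |(φ i : ℝ)|^q * kap N α i)) := by
  let g : ℤ × ℤ → ℝ := fun p => |((φ p.1 - φ p.2 : ℤ) : ℝ)| ^ q * |((p.1 - p.2 : ℤ) : ℝ)| ^ (-α)
  let b : ℤ × ℤ → ℝ := fun p => ∑ i ∈ cbox N, if p.1 = i then |(φ i : ℝ)|^q *
    (if (N:ℤ) < |p.2| then |((i-p.2:ℤ):ℝ)|^(-α) else 0) else 0
  have hb : HasSum b (∑ i ∈ cbox N, |(φ i : ℝ)|^q * kap N α i) := by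
    refine hasSum_sum fun i _ => ?_
    have hinj : Function.Injective (fun j : ℤ => (i, j)) := fun a b h => (Prod.mk.inj h).2
    rw [← hinj.hasSum_iff]
    · simp only [Function.comp_def, if_true]
      exact (summable_kap N α hα i).hasSum.mul_left _
    · rintro ⟨x, y⟩ hx
      simp only
      rw [if_neg]
      rintro rfl
      exact hx ⟨y, rfl⟩
  have hb2 : HasSum (b ∘ Prod.swap) (∑ i ∈ cbox N, |(φ i : ℝ)|^q * kap N α i) :=
    (Equiv.hasSum_iff (Equiv.prodComm ℤ ℤ)).2 hb
  have ha : HasSum (fun p => if p ∈ cbox N ×ˢ cbox N then g p else 0) (∑ p ∈ cbox N ×ˢ cbox N, g p) := by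
    have := hasSum_sum_of_ne_finset_zero (f := fun p => if p ∈ cbox N ×ˢ cbox N then g p else 0)
      (s := cbox N ×ˢ cbox N) (L := SummationFilter.unconditional _) (fun p hp => if_neg hp)
    convert this using 1
    refine sum_congr rfl fun p hp => by rw [if_pos hp]
  have htot := ha.add (hb.add hb2)
  refine Eq.subst (motive := fun f => HasSum f _) ?_ htot
  funext p
  symm
  revert p
  rintro ⟨i, j⟩
  have hbv : ∀ i j, b (i, j) = if i ∈ cbox N then |(φ i : ℝ)|^q *
    (if (N:ℤ) < |j| then |((i-j:ℤ):ℝ)|^(-α) else 0) else 0 := by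
    intro i j
    simp only [b]
    rw [sum_ite_eq]
  simp only [Function.comp, Prod.swap, hbv, mem_product, mem_cbox, g]
  by_cases h1 : |i| ≤ N <;> by_cases h2 : |j| ≤ N
  · simp [h1, h2, not_lt.2 h1, not_lt.2 h2]
  · have := hφ j (by omega)
    simp [h1, h2, this, not_le.1 h2]
  · have := hφ i (by omega)
    simp [h1, h2, this, not_le.1 h1, abs_sub_comm]
  · have h3 := hφ j (by omega)
    have h4 := hφ i (by omega)
    simp [h1, h2, h3, h4, hq.ne']

lemma count_cross (N x r : ℕ) :
    ((cbox N ×ˢ cbox N).filter (fun p => stp x p.1 ≠ stp x p.2 ∧ (p.1 - p.2).natAbs = r)).card ≤ 4 * r := by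
  have hsub : (cbox N ×ˢ cbox N).filter (fun p => stp x p.1 ≠ stp x p.2 ∧ (p.1 - p.2).natAbs = r) ⊆
      (((Ioc ((x:ℤ) - r) x).image (fun i => (i, i + (r:ℤ))) ∪
      (Ico (-(x:ℤ)) (-x + r)).image (fun i => (i, i - (r:ℤ)))) ∪
      (Ioc ((x:ℤ) - r) x).image (fun i => (i + (r:ℤ), i))) ∪
      (Ico (-(x:ℤ)) (-x + r)).image (fun i => (i - (r:ℤ), i)) := by
    rintro ⟨i, j⟩ h
    rw [mem_filter] at h
    obtain ⟨_, h1, h2⟩ := h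
    simp only [mem_union, mem_image, mem_Ioc, mem_Ico, Prod.mk.injEq]
    simp only [stp] at h1 h2
    split_ifs at h1 with ha hb hb
    · exact absurd rfl h1
    · rw [abs_le] at ha hb
      by_cases hij : j = i + r
      · left; left; left; exact ⟨i, by omega, rfl, by omega⟩
      · left; left; right; exact ⟨i, by omega, rfl, by omega⟩
    · rw [abs_le] at ha hb
      by_cases hij : i = j + r
      · left; right; exact ⟨j, by omega, by omega, rfl⟩
      · right; exact ⟨j, by omega, by omega, rfl⟩
    · exact absurd rfl h1
  refine (card_le_card hsub).trans ?_
  have c1 : ∀ f : ℤ → ℤ × ℤ, ((Ioc ((x:ℤ) - r) x).image f).card ≤ r := fun f =>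
    card_image_le.trans (by rw [Int.card_Ioc]; omega)
  have c2 : ∀ f : ℤ → ℤ × ℤ, ((Ico (-(x:ℤ)) (-x + r)).image f).card ≤ r := fun f =>
    card_image_le.trans (by rw [Int.card_Ico]; omega)
  refine (card_union_le _ _).trans ?_
  refine (Nat.add_le_add (card_union_le _ _) le_rfl).trans ?_
  refine (Nat.add_le_add (Nat.add_le_add (card_union_le _ _) le_rfl) le_rfl).trans ?_
  have := c1 (fun i => (i, i + (r:ℤ)))
  have := c2 (fun i => (i, i - (r:ℤ)))
  have := c1 (fun i => (i + (r:ℤ), i))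
  have := c2 (fun i => (i - (r:ℤ), i))
  omega

lemma sum_cross (N x : ℕ) (g : ℕ → ℝ) (hg : ∀ r, 0 ≤ g r) :
    ∑ p ∈ cbox N ×ˢ cbox N, (if stp x p.1 ≠ stp x p.2 then g (p.1 - p.2).natAbs else 0) ≤
      4 * ∑ r ∈ Icc 1 (2*N), (r:ℝ) * g r := by
  rw [← sum_filter]
  have hmaps : ∀ p ∈ (cbox N ×ˢ cbox N).filter (fun p => stp x p.1 ≠ stp x p.2),
      (p.1 - p.2).natAbs ∈ Icc 1 (2*N) := by
    rintro ⟨i, j⟩ h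
    rw [mem_filter, mem_product, mem_cbox, mem_cbox, abs_le, abs_le] at h
    obtain ⟨⟨h1, h2⟩, h3⟩ := h
    have : i ≠ j := by rintro rfl; exact h3 rfl
    rw [mem_Icc]
    simp only at h1 h2 ⊢
    omega
  rw [← sum_fiberwise_of_maps_to hmaps, mul_sum]
  refine sum_le_sum fun r _ => ?_
  rw [filter_filter]
  have : ∑ p ∈ (cbox N ×ˢ cbox N).filter (fun p => stp x p.1 ≠ stp x p.2 ∧ (p.1 - p.2).natAbs = r),
      g (p.1 - p.2).natAbs = ((cbox N ×ˢ cbox N).filter (fun p => stp x p.1 ≠ stp x p.2 ∧ (p.1 - p.2).natAbs = r)).card * g r := by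
    rw [← nsmul_eq_mul, ← sum_const]
    refine sum_congr rfl fun p hp => ?_
    rw [(mem_filter.1 hp).2.2]
  rw [this, ← mul_assoc]
  have := count_cross N x r
  have h4 : (((cbox N ×ˢ cbox N).filter (fun p => stp x p.1 ≠ stp x p.2 ∧ (p.1 - p.2).natAbs = r)).card : ℝ) ≤ 4 * r := by
    exact_mod_cast this
  exact mul_le_mul_of_nonneg_right h4 (hg r)

lemma count_y (X : Finset ℕ) (i j : ℤ) :
    (X.filter (fun y => stp y i ≠ stp y j)).card ≤ (i - j).natAbs := by
  have hsub : X.filter (fun y => stp y i ≠ stp y j) ⊆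
      Ico (min i.natAbs j.natAbs) (max i.natAbs j.natAbs) := by
    intro y h
    have h1 := (mem_filter.1 h).2
    simp only [stp] at h1
    rw [mem_Ico]
    split_ifs at h1 with ha hb hb
    · exact absurd rfl h1
    · rw [abs_le] at ha hb; omega
    · rw [abs_le] at ha hb; omega
    · exact absurd rfl h1
  refine (card_le_card hsub).trans ?_
  rw [Nat.card_Ico]
  omega

noncomputable def Bf (N : ℕ) (α s : ℝ) (r : ℕ) : ℝ := (max 1 (r:ℝ))^s * (N:ℝ)^(α-2-s)

lemma Bf_pos (N : ℕ) (hN : 1 ≤ N) (α s : ℝ) (r : ℕ) : 0 < Bf N α s r := by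
  unfold Bf
  have : (0:ℝ) < N := by exact_mod_cast hN
  have h2 : (0:ℝ) < max 1 (r:ℝ) := lt_of_lt_of_le one_pos (le_max_left _ _)
  positivity

lemma card_cbox_le (N : ℕ) (hN : 1 ≤ N) : ((cbox N).card : ℝ) ≤ 3 * N := by
  have : (cbox N).card ≤ 3 * N := by
    unfold cbox; rw [Int.card_Icc]; omega
  exact_mod_cast this

lemma bdry_sum (α : ℝ) (hα : 1 < α) (N : ℕ) (hN : 1 ≤ N) (x : ℕ) (hx : 2 * x ≤ N) (w : ℝ) (hw : 0 ≤ w) :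
    ∑ i ∈ cbox N, (if |i| ≤ (x:ℤ) then kap N α i * w else 0) ≤
      3 * (2 * 2^α / (α-1)) * (N:ℝ)^(2-α) * w := by
  have hN0 : (0:ℝ) < N := by exact_mod_cast hN
  have h1 : ∀ i ∈ cbox N, (if |i| ≤ (x:ℤ) then kap N α i * w else 0) ≤
      (2 * 2^α / (α-1)) * (N:ℝ)^(1-α) * w := by
    intro i _
    have ha : 0 < α - 1 := by linarith
    split_ifs with h
    · exact mul_le_mul_of_nonneg_right (kap_le α hα N hN i (by omega)) hw
    · positivity
  refine (sum_le_card_nsmul _ _ _ h1).trans ?_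
  rw [nsmul_eq_mul]
  have ha : 0 < α - 1 := by linarith
  refine (mul_le_mul_of_nonneg_right (card_cbox_le N hN) (by positivity)).trans (le_of_eq ?_)
  have : (N:ℝ)^(2-α) = N * (N:ℝ)^(1-α) := by
    rw [show 2-α = 1 + (1-α) by ring, Real.rpow_add hN0, Real.rpow_one]
  rw [this]; ring

/-- cost of smoothing -/
lemma est_kappa (β α s : ℝ) (hβ : 0 < β) (hα : 2 < α) (hs1 : α - 2 < s) (hs2 : s < α - 1) :
    ∃ κ : ℝ, ∀ N : ℕ, 1 ≤ N → ∀ x : ℕ, 2 * x ≤ N →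
      ∑ p ∈ cbox N ×ˢ cbox N, (if stp x p.1 ≠ stp x p.2 then
        β * ((p.1 - p.2).natAbs : ℝ)^(-α) * Bf N α s (p.1-p.2).natAbs else 0) +
      ∑ i ∈ cbox N, (if |i| ≤ (x:ℤ) then kap N α i * (2 * β * (N:ℝ)^(α-2)) else 0) ≤ κ := by
  refine ⟨4 * β * (2:ℝ)^(2-α+s) / (2-α+s) + 3 * (2 * 2^α / (α-1)) * (2 * β), fun N hN x hx => ?_⟩
  have hN0 : (0:ℝ) < N := by exact_mod_cast hN
  refine add_le_add ?_ ?_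
  · refine (sum_cross N x (fun r => β * (r:ℝ)^(-α) * Bf N α s r) (fun r => ?_)).trans ?_
    · have := Bf_pos N hN α s r
      positivity
    · have e : ∑ r ∈ Icc 1 (2*N), (r:ℝ) * (β * (r:ℝ)^(-α) * Bf N α s r) =
          β * (N:ℝ)^(α-2-s) * ∑ r ∈ Icc 1 (2*N), (r:ℝ)^(-(α-1-s)) := by
        rw [mul_sum]
        refine sum_congr rfl fun r hr => ?_
        have hr1 : 1 ≤ r := (mem_Icc.1 hr).1
        have hr1' : (1:ℝ) ≤ r := by exact_mod_cast hr1
        have hr0 : (0:ℝ) < r := by linarith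
        unfold Bf
        rw [max_eq_right hr1', show -(α-1-s) = 1 + (-α) + s by ring, Real.rpow_add hr0,
          Real.rpow_add hr0, Real.rpow_one]
        ring
      rw [e]
      have h2 := sum_rpow_le (α-1-s) (by linarith) (by linarith) (2*N)
      have h3 := mul_le_mul_of_nonneg_left h2 (by positivity : 0 ≤ β * (N:ℝ)^(α-2-s))
      have h4 := mul_le_mul_of_nonneg_left h3 (by norm_num : (0:ℝ) ≤ 4)
      refine h4.trans (le_of_eq ?_)
      push_cast
      rw [show 1 - (α-1-s) = 2-α+s by ring, Real.mul_rpow (by norm_num) hN0.le]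
      have : (N:ℝ)^(α-2-s) * (N:ℝ)^(2-α+s) = 1 := by
        rw [← Real.rpow_add hN0, show α-2-s+(2-α+s) = 0 by ring, Real.rpow_zero]
      have h5 : 4 * (β * (N:ℝ)^(α-2-s) * ((2:ℝ)^(2-α+s) * (N:ℝ)^(2-α+s) / (2-α+s)))
        = 4 * β * (2:ℝ)^(2-α+s) / (2-α+s) * ((N:ℝ)^(α-2-s) * (N:ℝ)^(2-α+s)) := by ring
      rw [h5, this, mul_one]
  · refine (bdry_sum α (by linarith) N hN x hx _ (by positivity)).trans (le_of_eq ?_)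
    have : (N:ℝ)^(2-α) * (N:ℝ)^(α-2) = 1 := by
      rw [← Real.rpow_add hN0, show 2-α+(α-2) = 0 by ring, Real.rpow_zero]
    linear_combination (3 * (2 * 2^α / (α-1)) * (2 * β)) * this

noncomputable def Dxy (N : ℕ) (β α q s : ℝ) (x y : ℕ) : ℝ :=
  ∑ p ∈ cbox N ×ˢ cbox N, (if stp x p.1 ≠ stp x p.2 ∧ stp y p.1 ≠ stp y p.2 then
        β * ((p.1 - p.2).natAbs : ℝ)^(-α) * min 2 (q * (Bf N α s (p.1-p.2).natAbs)^(-(2/q-1))) else 0) +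
  ∑ i ∈ cbox N, (if |i| ≤ (x:ℤ) ∧ |i| ≤ (y:ℤ) then
        kap N α i * (2 * β * min 2 (q * ((N:ℝ)^(α-2))^(-(2/q-1)))) else 0)

lemma Dxy_nonneg (N : ℕ) (hN : 1 ≤ N) (β α q s : ℝ) (hβ : 0 < β) (hq : 0 < q) (x y : ℕ) :
    0 ≤ Dxy N β α q s x y := by
  have hN0 : (0:ℝ) < N := by exact_mod_cast hN
  unfold Dxy
  refine add_nonneg (sum_nonneg fun p _ => ?_) (sum_nonneg fun i _ => ?_)
  · have := Bf_pos N hN α s (p.1-p.2).natAbs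
    split_ifs <;> positivity
  · have := kap_nonneg N α i
    split_ifs <;> positivity

lemma est_Dmax (β α q s : ℝ) (hβ : 0 < β) (hα : 2 < α) :
    ∃ C : ℝ, ∀ N : ℕ, 1 ≤ N → ∀ x : ℕ, 2 * x ≤ N → ∀ y, Dxy N β α q s x y ≤ C := by
  obtain ⟨C0, hC0, hC⟩ := sum_rpow_const (α-1) (by linarith)
  refine ⟨4 * (2 * β * C0) + 3 * (2 * 2^α / (α-1)) * (2 * β * 2), fun N hN x hx y => ?_⟩
  have hN0 : (0:ℝ) < N := by exact_mod_cast hN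
  have ha : 0 < α - 1 := by linarith
  unfold Dxy
  refine add_le_add ?_ ?_
  · have h1 : ∀ p ∈ cbox N ×ˢ cbox N, (if stp x p.1 ≠ stp x p.2 ∧ stp y p.1 ≠ stp y p.2 then
        β * ((p.1 - p.2).natAbs : ℝ)^(-α) * min 2 (q * (Bf N α s (p.1-p.2).natAbs)^(-(2/q-1))) else 0)
        ≤ if stp x p.1 ≠ stp x p.2 then β * ((p.1 - p.2).natAbs : ℝ)^(-α) * 2 else 0 := by
      intro p _
      split_ifs with h2 h3 h3
      · exact mul_le_mul_of_nonneg_left (min_le_left _ _) (by positivity)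
      · exact absurd h2.1 h3
      · positivity
      · exact le_rfl
    refine (sum_le_sum h1).trans ?_
    refine (sum_cross N x (fun r => β * (r:ℝ)^(-α) * 2) (fun r => by positivity)).trans ?_
    refine mul_le_mul_of_nonneg_left ?_ (by norm_num)
    refine le_trans (le_of_eq ?_) (mul_le_mul_of_nonneg_left (hC (2*N)) (by positivity : 0 ≤ 2*β))
    rw [mul_sum]
    refine sum_congr rfl fun r hr => ?_
    have hr1 : 1 ≤ r := (mem_Icc.1 hr).1
    have hr0 : (0:ℝ) < r := by exact_mod_cast hr1
    rw [show -(α-1) = 1 + (-α) by ring, Real.rpow_add hr0, Real.rpow_one]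
    ring
  · have h1 : ∀ i ∈ cbox N, (if |i| ≤ (x:ℤ) ∧ |i| ≤ (y:ℤ) then
        kap N α i * (2 * β * min 2 (q * ((N:ℝ)^(α-2))^(-(2/q-1)))) else 0) ≤
        if |i| ≤ (x:ℤ) then kap N α i * (2 * β * 2) else 0 := by
      intro i _
      have hk := kap_nonneg N α i
      split_ifs with h2 h3 h3
      · exact mul_le_mul_of_nonneg_left (mul_le_mul_of_nonneg_left (min_le_left _ _) (by positivity)) hk
      · exact absurd h2.1 h3
      · positivity
      · exact le_rfl
    refine (sum_le_sum h1).trans ?_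
    refine (bdry_sum α (by linarith) N hN x hx _ (by positivity)).trans ?_
    have : (N:ℝ)^(2-α) ≤ 1 := Real.rpow_le_one_of_one_le_of_nonpos (by exact_mod_cast hN) (by linarith)
    refine mul_le_mul_of_nonneg_right ?_ (by positivity)
    exact mul_le_of_le_one_right (by positivity) this

lemma est_Dsum (β α q s : ℝ) (hβ : 0 < β) (hq : 0 < q) (hq2 : q < 2) (hα : 2 < α)
    (hs1 : α - 2 < s) (hs2 : s * (2/q-1) < 3 - α) :
    ∃ C : ℝ, 0 < C ∧ ∀ N : ℕ, 1 ≤ N → 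
      ∑ x ∈ range (N/2+1), ∑ y ∈ range (N/2+1), Dxy N β α q s x y ≤
        C * ((N/2+1 : ℕ):ℝ)^2 * (N:ℝ)^(-((2/q)*(α-2))) := by
  set τ := 2/q-1 with hτ
  have hτ0 : 0 < τ := by
    have : 1 < 2/q := by rw [lt_div_iff₀ hq]; linarith
    rw [hτ]; linarith
  have ha : 0 < α - 1 := by linarith
  have hsτ : 0 < s * τ := by
    have : 0 < s := by linarith
    positivity
  have hex : 0 < 3 - α - s*τ := by linarith
  set C1 := 4 * (β * q) * (2:ℝ)^(3-α-s*τ) / (3-α-s*τ) with hC1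
  have hC1p : 0 < C1 := by positivity
  set C2 := 3 * (2 * 2^α / (α-1)) * (2 * β * q) with hC2
  have hC2p : 0 < C2 := by positivity
  refine ⟨2 * C1 + C2, by positivity, fun N hN => ?_⟩
  have hN0 : (0:ℝ) < N := by exact_mod_cast hN
  set X := range (N/2+1) with hX
  set m : ℝ := ((N/2+1 : ℕ):ℝ) with hm
  have hm0 : 0 < m := by rw [hm]; positivity
  have hcard : (X.card : ℝ) = m := by rw [hX, card_range]
  have hNm : (N:ℝ) ≤ 2 * m := by
    have : N ≤ 2 * (N/2+1) := by omega
    rw [hm]; exact_mod_cast this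
  have hγ : -((2/q)*(α-2)) = (2-α) - (α-2)*τ := by rw [hτ]; ring
  set γ' := -((2/q)*(α-2)) with hγ'
  unfold Dxy
  simp_rw [sum_add_distrib]
  have P1 : ∑ x ∈ X, ∑ y ∈ X, ∑ p ∈ cbox N ×ˢ cbox N, (if stp x p.1 ≠ stp x p.2 ∧ stp y p.1 ≠ stp y p.2 then
        β * ((p.1 - p.2).natAbs : ℝ)^(-α) * min 2 (q * (Bf N α s (p.1-p.2).natAbs)^(-τ)) else 0)
      ≤ m * (C1 * (N * (N:ℝ)^γ')) := by
    rw [← hcard, ← nsmul_eq_mul, ← sum_const]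
    refine sum_le_sum fun x hx => ?_
    rw [sum_comm]
    have h1 : ∀ p ∈ cbox N ×ˢ cbox N, ∑ y ∈ X, (if stp x p.1 ≠ stp x p.2 ∧ stp y p.1 ≠ stp y p.2 then
        β * ((p.1 - p.2).natAbs : ℝ)^(-α) * min 2 (q * (Bf N α s (p.1-p.2).natAbs)^(-τ)) else 0) ≤
        if stp x p.1 ≠ stp x p.2 then (fun r : ℕ => (r:ℝ) * (β * (r:ℝ)^(-α) * (q * (Bf N α s r)^(-τ)))) 
          (p.1-p.2).natAbs else 0 := by
      intro p _
      by_cases hc : stp x p.1 ≠ stp x p.2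
      · simp only [hc, true_and, if_true, ne_eq, not_false_eq_true]
        rw [← sum_filter, sum_const, nsmul_eq_mul]
        have h2 : ((X.filter (fun y => ¬ stp y p.1 = stp y p.2)).card : ℝ) ≤ ((p.1-p.2).natAbs : ℝ) := by
          exact_mod_cast count_y X p.1 p.2
        have hB := Bf_pos N hN α s (p.1-p.2).natAbs
        refine mul_le_mul h2 ?_ (by positivity) (by positivity)
        exact mul_le_mul_of_nonneg_left (min_le_right _ _) (by positivity)
      · simp [hc]
    refine (sum_le_sum h1).trans ?_
    refine (sum_cross N x (fun r : ℕ => (r:ℝ) * (β * (r:ℝ)^(-α) * (q * (Bf N α s r)^(-τ)))) (fun r => ?_)).trans ?_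
    · have hB := Bf_pos N hN α s r
      positivity
    have e : ∑ r ∈ Icc 1 (2*N), (r:ℝ) * ((r:ℝ) * (β * (r:ℝ)^(-α) * (q * (Bf N α s r)^(-τ)))) =
          β * q * (N:ℝ)^((α-2-s)*(-τ)) * ∑ r ∈ Icc 1 (2*N), (r:ℝ)^(-(α+s*τ-2)) := by
      rw [mul_sum]
      refine sum_congr rfl fun r hr => ?_
      have hr1 : 1 ≤ r := (mem_Icc.1 hr).1
      have hr1' : (1:ℝ) ≤ r := by exact_mod_cast hr1
      have hr0 : (0:ℝ) < r := by linarith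
      unfold Bf
      rw [max_eq_right hr1', Real.mul_rpow (by positivity) (by positivity), ← Real.rpow_mul hr0.le,
        ← Real.rpow_mul hN0.le, show -(α+s*τ-2) = 1 + 1 + (-α) + s*(-τ) by ring, Real.rpow_add hr0,
        Real.rpow_add hr0, Real.rpow_add hr0, Real.rpow_one]
      ring
    rw [e]
    have h2 := sum_rpow_le (α+s*τ-2) (by linarith) (by linarith) (2*N)
    have h3 := mul_le_mul_of_nonneg_left h2 (by positivity : 0 ≤ β * q * (N:ℝ)^((α-2-s)*(-τ)))
    have h4 := mul_le_mul_of_nonneg_left h3 (by norm_num : (0:ℝ) ≤ 4)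
    refine h4.trans (le_of_eq ?_)
    push_cast
    rw [show 1 - (α+s*τ-2) = 3-α-s*τ by ring, Real.mul_rpow (by norm_num) hN0.le]
    have h5 : (N:ℝ)^((α-2-s)*(-τ)) * (N:ℝ)^(3-α-s*τ) = N * (N:ℝ)^γ' := by
      rw [← Real.rpow_add hN0]
      nth_rewrite 2 [← Real.rpow_one (N:ℝ)]
      rw [← Real.rpow_add hN0, hγ]
      congr 1
      ring
    rw [← h5, hC1]
    ring
  have P2 : ∑ x ∈ X, ∑ y ∈ X, ∑ i ∈ cbox N, (if |i| ≤ (x:ℤ) ∧ |i| ≤ (y:ℤ) then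
        kap N α i * (2 * β * min 2 (q * ((N:ℝ)^(α-2))^(-τ))) else 0) ≤ m * (m * (C2 * (N:ℝ)^γ')) := by
    rw [← hcard, ← nsmul_eq_mul, ← sum_const]
    refine sum_le_sum fun x hx => ?_
    rw [← nsmul_eq_mul, ← sum_const]
    refine sum_le_sum fun y hy => ?_
    have h1 : ∀ i ∈ cbox N, (if |i| ≤ (x:ℤ) ∧ |i| ≤ (y:ℤ) then
        kap N α i * (2 * β * min 2 (q * ((N:ℝ)^(α-2))^(-τ))) else 0) ≤
        if |i| ≤ (x:ℤ) then kap N α i * (2 * β * (q * ((N:ℝ)^(α-2))^(-τ))) else 0 := by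
      intro i _
      have hk := kap_nonneg N α i
      split_ifs with h2 h3 h3
      · exact mul_le_mul_of_nonneg_left (mul_le_mul_of_nonneg_left (min_le_right _ _) (by positivity)) hk
      · exact absurd h2.1 h3
      · positivity
      · exact le_rfl
    refine (sum_le_sum h1).trans ?_
    have hx2 : 2 * x ≤ N := by have := mem_range.1 hx; omega
    refine (bdry_sum α (by linarith) N hN x hx2 _ (by positivity)).trans (le_of_eq ?_)
    have h5 : (N:ℝ)^(2-α) * ((N:ℝ)^(α-2))^(-τ) = (N:ℝ)^γ' := by
      rw [← Real.rpow_mul hN0.le, ← Real.rpow_add hN0, hγ]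
      congr 1; ring
    rw [← h5, hC2]; ring
  refine (add_le_add P1 P2).trans ?_
  have hp : 0 ≤ (N:ℝ)^γ' := by positivity
  have : m * (C1 * (N * (N:ℝ)^γ')) ≤ m * (C1 * (2 * m * (N:ℝ)^γ')) := by gcongr
  refine (add_le_add this le_rfl).trans (le_of_eq ?_)
  ring

def cgrp (N : ℕ) : AddSubgroup (ℤ → ℤ) where
  carrier := {φ | ∀ k : ℤ, (N : ℤ) < |k| → φ k = 0}
  add_mem' := by
    intro a b ha hb k hk
    simp [ha k hk, hb k hk]
  zero_mem' := by intro k _; rfl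
  neg_mem' := by
    intro a ha k hk
    simp [ha k hk]

def evl (N : ℕ) (i : ℤ) : cgrp N →+ ℤ := (Pi.evalAddMonoidHom (fun _ => ℤ) i).comp (cgrp N).subtype

lemma evl_apply (N : ℕ) (i : ℤ) (φ : cgrp N) : evl N i φ = φ.1 i := rfl

def Lch (N : ℕ) : (ℤ × ℤ) ⊕ ℤ → (cgrp N →+ ℤ)
  | Sum.inl p => evl N p.1 - evl N p.2
  | Sum.inr i => evl N i

noncomputable def cf (N : ℕ) (β α : ℝ) : (ℤ × ℤ) ⊕ ℤ → ℝ
  | Sum.inl p => β * ((p.1 - p.2).natAbs : ℝ)^(-α)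
  | Sum.inr i => kap N α i * (2 * β)

noncomputable def Bch (N : ℕ) (α s : ℝ) : (ℤ × ℤ) ⊕ ℤ → ℝ
  | Sum.inl p => Bf N α s (p.1 - p.2).natAbs
  | Sum.inr _ => (N:ℝ)^(α-2)

noncomputable def Tch (N : ℕ) : Finset ((ℤ × ℤ) ⊕ ℤ) := (cbox N ×ˢ cbox N).disjSum (cbox N)

lemma stp_mem (N x : ℕ) (hx : x ≤ N) : stp x ∈ cgrp N := by
  intro k hk
  simp only [stp]
  rw [if_neg]; omega

noncomputable def sch (N : ℕ) (x : ℕ) : cgrp N := ⟨stp (min x N), stp_mem N _ (min_le_right _ _)⟩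

lemma cf_nonneg (N : ℕ) (β α : ℝ) (hβ : 0 < β) (e) : 0 ≤ cf N β α e := by
  cases e with
  | inl p => unfold cf; positivity
  | inr i => have := kap_nonneg N α i; unfold cf; positivity

lemma Bch_pos (N : ℕ) (hN : 1 ≤ N) (α s : ℝ) (e) : 0 < Bch N α s e := by
  have hN0 : (0:ℝ) < N := by exact_mod_cast hN
  cases e with
  | inl p => exact Bf_pos N hN α s _
  | inr i => unfold Bch; positivity

lemma energy_eq (N : ℕ) (β α q : ℝ) (hα : 1 < α) (hq : 0 < q) (φ : cgrp N) :
    chainEnergy β α q φ.1 = ∑ e ∈ Tch N, cf N β α e * |(Lch N e φ : ℝ)|^q := by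
  have h := hasSum_energy N α q hα hq φ.1 φ.2
  unfold chainEnergy
  have h2 : (fun p : ℤ × ℤ => if p.1 = p.2 then 0
      else |((φ.1 p.1 - φ.1 p.2 : ℤ) : ℝ)| ^ q / |((p.1 - p.2 : ℤ) : ℝ)| ^ α) =
      (fun p : ℤ × ℤ => |((φ.1 p.1 - φ.1 p.2 : ℤ) : ℝ)| ^ q * |((p.1 - p.2 : ℤ) : ℝ)| ^ (-α)) := by
    funext p
    split_ifs with hp
    · rw [hp]; simp [hq.ne']
    · rw [Real.rpow_neg (abs_nonneg _)]; rfl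
  rw [h2, h.tsum_eq]
  unfold Tch
  rw [sum_disjSum]
  rw [mul_add, mul_sum]
  congr 1
  · refine sum_congr rfl fun p _ => ?_
    simp only [cf, Lch, AddMonoidHom.sub_apply, evl_apply, Nat.cast_natAbs, Int.cast_abs]
    ring
  · rw [← sum_add_distrib, mul_sum]
    refine sum_congr rfl fun i _ => ?_
    simp only [cf, Lch, evl_apply]
    ring

lemma weight_eq_s6 (N : ℕ) (β α q : ℝ) (hα : 1 < α) (hq : 0 < q) (φ : cgrp N) :
    chainWeight β α q φ.1 = ∏ e ∈ Tch N, Real.exp (-(cf N β α e * |(Lch N e φ : ℝ)|^q)) := by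
  unfold chainWeight
  rw [energy_eq N β α q hα hq, ← Real.exp_sum, sum_neg_distrib]

lemma chain_summable (N : ℕ) (β α q : ℝ) (hβ : 0 < β) (hα : 1 < α) (hq : 0 < q) :
    Summable fun φ : cgrp N => (1 + (evl N 0 φ : ℝ)^2) *
      ∏ e ∈ Tch N, Real.exp (-(cf N β α e * |(Lch N e φ : ℝ)|^q)) := by
  have h0m : (0:ℤ) ∈ cbox N := by rw [mem_cbox]; simp
  obtain ⟨i0, hi0, hmin⟩ := exists_min_image (cbox N) (kap N α) ⟨0, h0m⟩
  set c := kap N α i0 * (2 * β) with hc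
  have hc0 : 0 < c := by
    have := kap_pos N α hα i0 ((mem_cbox N i0).1 hi0)
    positivity
  set h : ℤ → ℝ := fun a => (1 + (a:ℝ)^2) * Real.exp (-(c * |(a:ℝ)|^q)) with hh
  have hsum := summable_pi (ι := cbox N) h (fun a => by simp only [hh]; positivity) (summable_h c q hc0 hq)
  have hinj : Function.Injective (fun (φ : cgrp N) (i : cbox N) => φ.1 i.1) := by
    intro φ ψ hφ
    apply Subtype.ext
    funext k
    by_cases hk : k ∈ cbox N
    · exact congrFun hφ ⟨k, hk⟩
    · rw [mem_cbox, not_le] at hk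
      rw [φ.2 k hk, ψ.2 k hk]
  refine Summable.of_nonneg_of_le (fun φ => ?_) (fun φ => ?_) (hsum.comp_injective hinj)
  · have : 0 ≤ ∏ e ∈ Tch N, Real.exp (-(cf N β α e * |(Lch N e φ : ℝ)|^q)) :=
      prod_nonneg fun e _ => (Real.exp_pos _).le
    positivity
  · simp only [Function.comp, hh]
    rw [prod_mul_distrib]
    have A1 : (1 + (evl N 0 φ : ℝ)^2) ≤ ∏ i : cbox N, (1 + ((φ.1 i.1 : ℤ):ℝ)^2) := by
      have := prod_le_prod_of_subset_of_one_le' (s := {(⟨0, h0m⟩ : cbox N)}) (t := univ)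
        (f := fun i : cbox N => (1 + ((φ.1 i.1).natAbs)^2)) (subset_univ _) (fun i _ _ => by omega)
      rw [prod_singleton] at this
      have h2 : ((1 + ((φ.1 0).natAbs)^2 : ℕ) : ℝ) ≤ ((∏ i : cbox N, (1 + ((φ.1 i.1).natAbs)^2) : ℕ) : ℝ) := by
        exact_mod_cast this
      push_cast at h2
      simpa [evl_apply, Nat.cast_natAbs, sq_abs] using h2
    refine mul_le_mul A1 ?_ (prod_nonneg fun e _ => (Real.exp_pos _).le) (prod_nonneg fun i _ => by positivity)
    rw [← Real.exp_sum, ← Real.exp_sum, Real.exp_le_exp, sum_neg_distrib, sum_neg_distrib, neg_le_neg_iff]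
    unfold Tch
    rw [sum_disjSum]
    have B1 : 0 ≤ ∑ p ∈ cbox N ×ˢ cbox N, cf N β α (Sum.inl p) * |(Lch N (Sum.inl p) φ : ℝ)|^q :=
      sum_nonneg fun p _ => mul_nonneg (cf_nonneg N β α hβ _) (by positivity)
    have B2 : ∑ i : cbox N, c * |((φ.1 i.1 : ℤ):ℝ)|^q ≤
        ∑ i ∈ cbox N, cf N β α (Sum.inr i) * |(Lch N (Sum.inr i) φ : ℝ)|^q := by
      rw [← sum_coe_sort (cbox N)]
      refine sum_le_sum fun i _ => ?_
      simp only [cf, Lch, evl_apply]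
      refine mul_le_mul_of_nonneg_right ?_ (by positivity)
      rw [hc]
      exact mul_le_mul_of_nonneg_right (hmin i.1 i.2) (by positivity)
    linarith

lemma chainVar_eq_s6 (N : ℕ) (β α q : ℝ) (hα : 1 < α) (hq : 0 < q) :
    chainVar N β α q = (∑' φ : cgrp N, (evl N 0 φ : ℝ)^2 *
      ∏ e ∈ Tch N, Real.exp (-(cf N β α e * |(Lch N e φ : ℝ)|^q))) /
      ∑' φ : cgrp N, ∏ e ∈ Tch N, Real.exp (-(cf N β α e * |(Lch N e φ : ℝ)|^q)) := by
  have hmean : (∑' φ : ChainConfig N, ((φ.val 0 : ℤ) : ℝ) * chainWeight β α q φ.val) = 0 := by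
    change (∑' φ : cgrp N, ((φ.val 0 : ℤ) : ℝ) * chainWeight β α q φ.val) = 0
    have h1 := Equiv.tsum_eq (Equiv.neg (cgrp N)) (fun φ : cgrp N => ((φ.val 0 : ℤ) : ℝ) * chainWeight β α q φ.val)
    have h2 : ∀ φ : cgrp N, (((Equiv.neg (cgrp N) φ).val 0 : ℤ) : ℝ) * chainWeight β α q (Equiv.neg (cgrp N) φ).val
        = - (((φ.val 0 : ℤ) : ℝ) * chainWeight β α q φ.val) := by
      intro φ
      rw [weight_eq_s6 N β α q hα hq, weight_eq_s6 N β α q hα hq]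
      simp
    rw [tsum_congr h2, tsum_neg] at h1
    linarith
  unfold chainVar chainMean chainZ
  rw [hmean]
  simp only [zero_div, ne_eq, OfNat.ofNat_ne_zero, not_false_eq_true, zero_pow, sub_zero]
  change (∑' φ : cgrp N, ((φ.val 0 : ℤ) : ℝ)^2 * chainWeight β α q φ.val) / 
    (∑' φ : cgrp N, chainWeight β α q φ.val) = _
  congr 1
  · refine tsum_congr fun φ => ?_
    rw [weight_eq_s6 N β α q hα hq]; rfl
  · refine tsum_congr fun φ => ?_
    rw [weight_eq_s6 N β α q hα hq]

lemma term_bound (q B c : ℝ) (hq : 0 < q) (hq2 : q < 2) (hB : 0 < B) (hc : 0 ≤ c) (a b b' : ℤ)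
    (hbb : b ≠ 0 → b' ≠ 0 → b = b' ∧ b^2 ≤ 1) :
    c * sm q B a + c * sm q B (a - b - b') - c * sm q B (a - b) - c * sm q B (a - b') ≤
      if b ≠ 0 ∧ b' ≠ 0 then c * min 2 (q * B^(-(2/q-1))) else 0 := by
  split_ifs with h
  · obtain ⟨rfl, h1⟩ := hbb h.1 h.2
    have := mul_le_mul_of_nonneg_left (sm_second q B hq hq2 hB a b h1) hc
    linarith
  · by_cases h1 : b = 0
    · subst h1; simp
    · have h2 : b' = 0 := by
        by_contra h3
        exact h ⟨h1, h3⟩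
      subst h2; simp

lemma stp_cases (x : ℕ) (k : ℤ) : (|k| ≤ x ∧ stp x k = 1) ∨ ((x:ℤ) < |k| ∧ stp x k = 0) := by
  unfold stp
  split_ifs with h
  · left; exact ⟨h, rfl⟩
  · right; exact ⟨by omega, rfl⟩

lemma chain_bound (N : ℕ) (hN : 1 ≤ N) (β α q s κ : ℝ) (hβ : 0 < β) (hα : 2 < α) (hq : 0 < q) (hq2 : q < 2)
    (hκ : ∀ x : ℕ, 2 * x ≤ N →
      ∑ p ∈ cbox N ×ˢ cbox N, (if stp x p.1 ≠ stp x p.2 then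
        β * ((p.1 - p.2).natAbs : ℝ)^(-α) * Bf N α s (p.1-p.2).natAbs else 0) +
      ∑ i ∈ cbox N, (if |i| ≤ (x:ℤ) then kap N α i * (2 * β * (N:ℝ)^(α-2)) else 0) ≤ κ)
    (θ : ℝ) (hθ : 0 ≤ θ) :
    2 * θ * ((N/2+1 : ℕ):ℝ) * Real.exp (-κ) -
      θ^2 * ∑ x ∈ range (N/2+1), ∑ y ∈ range (N/2+1), (Real.exp (Dxy N β α q s x y) - 1)
      ≤ chainVar N β α q := by
  have hsum := chain_summable N β α q hβ (by linarith) hq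
  have hsx : ∀ x ∈ range (N/2+1), (sch N x).1 = stp x := by
    intro x hx
    have : min x N = x := by have := mem_range.1 hx; omega
    simp only [sch, this]
  have hB := Bch_pos N hN α s
  have hcf := cf_nonneg N β α hβ
  have main := abstract_bound (Tch N) (Lch N) (fun e a => cf N β α e * |(a:ℝ)|^q)
    (fun e a => cf N β α e * sm q (Bch N α s e) a)
    (fun e _ a => mul_le_mul_of_nonneg_left (sm_lower q _ hq (hB e) a) (hcf e))
    (evl N 0) (range (N/2+1)) (sch N)
    (fun x hx => by
      rw [evl_apply, hsx x hx]; simp [stp])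
    (Dxy N β α q s) (fun x _ y _ => Dxy_nonneg N hN β α q s hβ hq x y)
    (fun x hx y hy φ => by
      have hb : ∀ e ∈ Tch N, Lch N e (sch N x) ≠ 0 → Lch N e (sch N y) ≠ 0 →
          Lch N e (sch N x) = Lch N e (sch N y) ∧ (Lch N e (sch N x))^2 ≤ 1 := by
        intro e _ h1 h2
        cases e with
        | inl p =>
          simp only [Lch, AddMonoidHom.sub_apply, evl_apply, hsx x hx, hsx y hy] at h1 h2 ⊢
          rcases stp_cases x p.1 with ⟨a1, a2⟩ | ⟨a1, a2⟩ <;>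
          rcases stp_cases x p.2 with ⟨b1, b2⟩ | ⟨b1, b2⟩ <;>
          rcases stp_cases y p.1 with ⟨c1, c2⟩ | ⟨c1, c2⟩ <;>
          rcases stp_cases y p.2 with ⟨d1, d2⟩ | ⟨d1, d2⟩ <;>
          rw [a2, b2] at h1 ⊢ <;> rw [c2, d2] at h2 ⊢ <;> first | omega | norm_num
        | inr i =>
          simp only [Lch, evl_apply, hsx x hx, hsx y hy] at h1 h2 ⊢
          rcases stp_cases x i with ⟨a1, a2⟩ | ⟨a1, a2⟩ <;>
          rcases stp_cases y i with ⟨c1, c2⟩ | ⟨c1, c2⟩ <;>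
          rw [a2] at h1 ⊢ <;> rw [c2] at h2 ⊢ <;> first | omega | norm_num
      refine (sum_le_sum fun e he => term_bound q (Bch N α s e) (cf N β α e) hq hq2 (hB e) (hcf e)
        (Lch N e φ) (Lch N e (sch N x)) (Lch N e (sch N y)) (hb e he)).trans (le_of_eq ?_)
      unfold Tch Dxy
      rw [sum_disjSum]
      congr 1
      · refine sum_congr rfl fun p _ => ?_
        simp only [Lch, AddMonoidHom.sub_apply, evl_apply, hsx x hx, hsx y hy, cf, Bch, sub_ne_zero]
      · refine sum_congr rfl fun i _ => ?_
        have e1 : ∀ x : ℕ, stp x i ≠ 0 ↔ |i| ≤ (x:ℤ) := fun x => by simp [stp]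
        simp only [Lch, evl_apply, hsx x hx, hsx y hy, cf, Bch, e1]
        split_ifs
        · ring
        · rfl)
    κ
    (fun x hx φ => by
      refine le_trans ?_ (hκ x (by have := mem_range.1 hx; omega))
      have h1 : ∀ e ∈ Tch N, (if Lch N e (sch N x) ≠ 0 then cf N β α e * sm q (Bch N α s e) (Lch N e φ)
          - cf N β α e * |(Lch N e φ : ℝ)|^q else 0) ≤
          if Lch N e (sch N x) ≠ 0 then cf N β α e * Bch N α s e else 0 := by
        intro e _
        split_ifs
        · have := mul_le_mul_of_nonneg_left (sm_upper q _ hq hq2 (hB e) (Lch N e φ)) (hcf e)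
          linarith
        · exact le_rfl
      refine (sum_le_sum h1).trans (le_of_eq ?_)
      unfold Tch
      rw [sum_disjSum]
      congr 1
      · refine sum_congr rfl fun p _ => ?_
        simp only [Lch, AddMonoidHom.sub_apply, evl_apply, hsx x hx, cf, Bch, sub_ne_zero]
      · refine sum_congr rfl fun i _ => ?_
        have e1 : ∀ x : ℕ, stp x i ≠ 0 ↔ |i| ≤ (x:ℤ) := fun x => by simp [stp]
        simp only [Lch, evl_apply, hsx x hx, cf, Bch, e1]
        split_ifs
        · ring
        · rfl)
    hsum θ hθ
  rw [chainVar_eq_s6 N β α q (by linarith) hq, le_div_iff₀]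
  · rw [card_range] at main
    exact main
  · have hU : Summable fun φ : cgrp N => ∏ e ∈ Tch N, Real.exp (-(cf N β α e * |(Lch N e φ : ℝ)|^q)) := by
      refine Summable.of_nonneg_of_le (fun φ => prod_nonneg fun e _ => (Real.exp_pos _).le) (fun φ => ?_) hsum
      have : 0 ≤ ∏ e ∈ Tch N, Real.exp (-(cf N β α e * |(Lch N e φ : ℝ)|^q)) :=
        prod_nonneg fun e _ => (Real.exp_pos _).le
      nlinarith [sq_nonneg (evl N 0 φ : ℝ)]
    exact hU.tsum_pos (fun φ => prod_nonneg fun e _ => (Real.exp_pos _).le) 0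
      (prod_pos fun e _ => Real.exp_pos _)

/-- **Lower bound for the `q`-SOS long-range chain for `α ∈ (2, 2 + q/2)`.**
For every `β ∈ (0,∞)`, every `q ∈ (0,2)` and every `α ∈ (2, 2 + q/2)`, there exists
`c_β > 0` such that for every `N ≥ 1`,
`c_β N^{(2/q)(α−2)} ≤ Var^{q-SOS}_{N,β,α}[φ(0)]`. -/
theorem qSOS_chain_lower_bound_alpha_two_to_critical
    (β : ℝ) (hβ : 0 < β) (q : ℝ) (hq₀ : 0 < q) (hq₂ : q < 2)
    (α : ℝ) (hα₁ : 2 < α) (hα₂ : α < 2 + q / 2) :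
    ∃ c : ℝ, 0 < c ∧
      ∀ N : ℕ, 1 ≤ N →
        c * (N : ℝ) ^ ((2 / q) * (α - 2)) ≤ chainVar N β α q := by
  have hτ0 : 0 < 2/q-1 := by
    have : 1 < 2/q := by rw [lt_div_iff₀ hq₀]; linarith
    linarith
  have hcrit : α - 2 < (3-α)/(2/q-1) := by
    rw [lt_div_iff₀ hτ0]
    have : (α-2)*(2/q) < 1 := by
      rw [mul_div_assoc', div_lt_one hq₀]; linarith
    nlinarith
  obtain ⟨s, hs1, hs2⟩ := exists_between (lt_min hcrit (by linarith : α - 2 < α - 1))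
  have hs3 : s * (2/q-1) < 3 - α := by
    rw [← lt_div_iff₀ hτ0]; exact lt_of_lt_of_le hs2 (min_le_left _ _)
  have hs4 : s < α - 1 := lt_of_lt_of_le hs2 (min_le_right _ _)
  obtain ⟨κ, hκ⟩ := est_kappa β α s hβ hα₁ hs1 hs4
  obtain ⟨Dm, hDm⟩ := est_Dmax β α q s hβ hα₁
  obtain ⟨C2, hC2, hDs⟩ := est_Dsum β α q s hβ hq₀ hq₂ hα₁ hs1 hs3
  set p := Real.exp (-κ) with hp
  have hp0 : 0 < p := Real.exp_pos _
  set C3 := Real.exp Dm * C2 with hC3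
  have hC30 : 0 < C3 := by positivity
  refine ⟨p^2/C3, by positivity, fun N hN => ?_⟩
  have hN0 : (0:ℝ) < N := by exact_mod_cast hN
  set m : ℝ := ((N/2+1 : ℕ):ℝ) with hm
  have hm0 : 0 < m := by rw [hm]; positivity
  set G := (N : ℝ) ^ ((2 / q) * (α - 2)) with hG
  have hG0 : 0 < G := by positivity
  have hK : ∑ x ∈ range (N/2+1), ∑ y ∈ range (N/2+1), (Real.exp (Dxy N β α q s x y) - 1) ≤
      C3 * m^2 * G⁻¹ := by
    have h1 : ∑ x ∈ range (N/2+1), ∑ y ∈ range (N/2+1), (Real.exp (Dxy N β α q s x y) - 1) ≤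
        ∑ x ∈ range (N/2+1), ∑ y ∈ range (N/2+1), Real.exp Dm * Dxy N β α q s x y := by
      refine sum_le_sum fun x hx => sum_le_sum fun y _ => ?_
      have hd0 := Dxy_nonneg N hN β α q s hβ hq₀ x y
      have hd1 := hDm N hN x (by have := mem_range.1 hx; omega) y
      set d := Dxy N β α q s x y
      have h2 : Real.exp d - 1 ≤ Real.exp d * d := by
        have := Real.add_one_le_exp (-d)
        have h3 : Real.exp d * Real.exp (-d) = 1 := by rw [← Real.exp_add]; simp
        nlinarith [Real.exp_pos d]
      exact h2.trans (mul_le_mul_of_nonneg_right (Real.exp_le_exp.2 hd1) hd0)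
    refine h1.trans ?_
    simp_rw [← mul_sum]
    have h4 := mul_le_mul_of_nonneg_left (hDs N hN) (Real.exp_pos Dm).le
    refine h4.trans (le_of_eq ?_)
    rw [Real.rpow_neg hN0.le, hC3]
    ring
  have hb := chain_bound N hN β α q s κ hβ hα₁ hq₀ hq₂ (hκ N hN) (p * G / (C3 * m)) (by positivity)
  refine le_trans ?_ hb
  have h5 := mul_le_mul_of_nonneg_left hK (sq_nonneg (p * G / (C3 * m)))
  have h6 : (p * G / (C3 * m))^2 * (C3 * m^2 * G⁻¹) = p^2/C3 * G := by
    field_simp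
  have h7 : 2 * (p * G / (C3 * m)) * m * p = 2 * (p^2/C3 * G) := by
    field_simp
  rw [h7]
  linarith
end
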